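/- Let p be a prime and X an indecomposable finite cycle set with |X| = p². Then X is isomorphic to a cycle set of one of the following forms: (1) ℤ_{p²} with x·y = y+1; (2) ℤ_p × ℤ_p with (a,x)·(b,y) = (b+1, y + χ₀(b)·S + Φ(b−a)), where Φ : ℤ_p → ℤ_p is a non-constant map with Φ(0) = 0 and S ∈ ℤ_p; (3) ℤ_p × ℤ_p with (a,x)·(b,y) = (αb + αx, αy + αΦ(b−a)), where Φ : ℤ_p → ℤ_p is a non-constant map with Φ(A) = Φ(−A) for all A ∈ ℤ_p and α ∈ ℤ_p ∖ {0} satisfies Φ(αA) = αΦ(A) for all A ∈ ℤ_p. -/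

import Mathlib

/-- A (non-degenerate) cycle set: a set with a binary operation satisfying
(C1) `(x·y)·(x·z) = (y·x)·(y·z)`, (C2) each left translation is bijective and
(C3) the square map `x ↦ x·x` is bijective. -/
structure CycleSet (X : Type*) where
  op : X → X → X
  c1 : ∀ x y z : X, op (op x y) (op x z) = op (op y x) (op y z)
  c2 : ∀ x : X, Function.Bijective (op x)
  c3 : Function.Bijective (fun x : X => op x x)

namespace CycleSet

variable {X Y : Type*}

/-- The permutation `σ_x : y ↦ x·y`. -/
noncomputable def sigma (C : CycleSet X) (x : X) : Equiv.Perm X :=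
  Equiv.ofBijective (C.op x) (C.c2 x)

/-- The permutation group `𝒢(X)` generated by all `σ_x`. -/
noncomputable def permGroup (C : CycleSet X) : Subgroup (Equiv.Perm X) :=
  Subgroup.closure (Set.range C.sigma)

/-- A cycle set is indecomposable if `𝒢(X)` acts transitively on `X`. -/
def Indecomposable (C : CycleSet X) : Prop :=
  ∀ x y : X, ∃ g ∈ C.permGroup, g x = y

/-- A cycle set is irretractable if `σ_x = σ_y` implies `x = y`. -/
def Irretractable (C : CycleSet X) : Prop :=
  ∀ x y : X, C.op x = C.op y → x = y

/-- `f` is an isomorphism of cycle sets from `C` to `D`. -/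
def IsIso (C : CycleSet X) (D : CycleSet Y) (f : X → Y) : Prop :=
  Function.Bijective f ∧ ∀ x y : X, f (C.op x y) = D.op (f x) (f y)

/-- Two cycle sets are isomorphic if there is an isomorphism between them. -/
def Iso (C : CycleSet X) (D : CycleSet Y) : Prop :=
  ∃ f : X → Y, C.IsIso D f

end CycleSet

/-!
Powers of the permutations `σ_x`, formed in the additive group of the left brace on `𝒢(X)`, give
the cables of a cycle set, and any two cables act compatibly on each other. Splitting this brace
into its `p`-primary part and the rest writes `x · y` as `E.op (D.op x x) (D.op x y)`, where `D` is
still indecomposable, `𝒢(D)` is a `p`-group, and `E` is composed of cycle sets which are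
compatible with `D` and have a fixed point.

A transitive `p`-group on `p ^ 2` points is conjugate to a group of permutations
`(b, y) ↦ (b + s, y + φ b)` of `ℤ_p × ℤ_p`. Acting on the brace of `D`, it has nonzero fixed
points, and these are automorphisms of `D`. Their presence forces `D`, up to coordinates, to be
either `(b + 1, y + F a b)` or `(b + x, y + Φ (b - a))` with `Φ` even and not constant.
Compatibility with `D` and a fixed point then make `E` trivial in the first case and
`v · (a, x) = (α a + s, α x)` in the second. In the first case (C1) gives
`F a b = Φ (b - a) + F b b`, whose second term is reduced to `χ₀(b) S` by a shear.
-/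

section ArithmeticAndGroups

lemma exists_modEq_orthogonal_idempotents {a b : ℕ} (h : a.Coprime b) :
    ∃ c c' : ℕ, b ∣ c ∧ a ∣ c' ∧ c + c' ≡ 1 [MOD a * b] := by
  obtain ⟨c, hca, hcb⟩ := Nat.chineseRemainder h 1 0
  obtain ⟨c', hca', hcb'⟩ := Nat.chineseRemainder h 0 1
  refine ⟨c, c', Nat.modEq_zero_iff_dvd.mp hcb, Nat.modEq_zero_iff_dvd.mp hca', ?_⟩
  rw [← Nat.modEq_and_modEq_iff_modEq_mul h]
  exact ⟨by simpa using hca.add hca', by simpa using hcb.add hcb'⟩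

lemma nsmul_eq_self_of_modEq_one {A : Type*} [AddGroup A] {N c : ℕ} {x : A} (hx : N • x = 0)
    (hc : c ≡ 1 [MOD N]) : c • x = x := by
  have h := nsmul_eq_nsmul_iff_modEq.mpr (hc.of_dvd (addOrderOf_dvd_of_nsmul_eq_zero hx))
  rwa [one_nsmul] at h

lemma coprime_card_of_forall_nsmul_eq_zero {A : Type*} [AddGroup A] [Finite A] {p m : ℕ}
    [Fact p.Prime] (hm : ¬ p ∣ m) (h : ∀ a : A, m • a = 0) : p.Coprime (Nat.card A) := by
  rw [Nat.Prime.coprime_iff_not_dvd Fact.out]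
  intro hdvd
  obtain ⟨a, ha⟩ := exists_prime_addOrderOf_dvd_card' p hdvd
  exact hm (ha ▸ addOrderOf_dvd_of_nsmul_eq_zero (h a))

lemma isPretransitive_of_coprime_index {G X : Type*} [Group G] [MulAction G X] [Finite X]
    [MulAction.IsPretransitive G X] {H : Subgroup G} (hH : H.index.Coprime (Nat.card X)) :
    MulAction.IsPretransitive H X := by
  suffices horbit : ∀ x : X, MulAction.orbit H x = Set.univ from
    ⟨fun x y => (horbit x).symm.subset (Set.mem_univ y)⟩
  intro x
  have hstab : (MulAction.stabilizer G x).relIndex H = (MulAction.orbit H x).ncard :=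
    MulAction.index_stabilizer H x
  have hdvd : Nat.card X ∣ (MulAction.orbit H x).ncard := by
    refine Nat.Coprime.dvd_of_dvd_mul_right hH.symm ?_
    rw [← MulAction.index_stabilizer_of_transitive G x, ← hstab, ← Subgroup.inf_relIndex_right,
      Subgroup.relIndex_mul_index inf_le_right]
    exact Subgroup.index_dvd_of_le inf_le_left
  have hpos : 0 < (MulAction.orbit H x).ncard :=
    (Set.ncard_pos (Set.toFinite _)).mpr (MulAction.nonempty_orbit x)
  exact (Set.eq_univ_iff_ncard _).mpr
    (le_antisymm (Set.ncard_le_card _) (Nat.le_of_dvd hpos hdvd))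

end ArithmeticAndGroups

section FunctionsOnZModPrime

lemma exists_ne_zero_of_exists_ne {α β : Type*} [Zero β] {k : α → β} (h : ∃ i j, k i ≠ k j) :
    ∃ i, k i ≠ 0 := by
  obtain ⟨i, j, hij⟩ := h
  by_contra! h0
  exact hij (by rw [h0, h0])

lemma apply_add_natCast_mul {A α : Type*} [Semiring A] {k : A → α} {s : A} {R : α → α}
    (h : ∀ a, k (a + s) = R (k a)) (n : ℕ) (a : A) : k (a + n * s) = R^[n] (k a) := by
  induction n with
  | zero => rw [Nat.cast_zero, zero_mul, add_zero, Function.iterate_zero, id]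
  | succ n ih => rw [Nat.cast_succ, add_one_mul, ← add_assoc, h, ih, Function.iterate_succ_apply']

lemma pow_val_add {M : Type*} [Monoid M] {n : ℕ} [NeZero n] {z : M} (hz : z ^ n = 1)
    (a b : ZMod n) : z ^ (a + b).val = z ^ a.val * z ^ b.val := by
  rw [ZMod.val_add, ← pow_add, ← pow_eq_pow_mod _ hz]

variable {p : ℕ} [Fact p.Prime]

lemma apply_eq_of_apply_add_eq {α : Type*} {k : ZMod p → α} {s : ZMod p} (hs : s ≠ 0)
    (h : ∀ a, k (a + s) = k a) (a b : ZMod p) : k a = k b := by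
  have hn := apply_add_natCast_mul (R := id) h ((a - b) / s).val b
  rwa [ZMod.natCast_zmod_val, div_mul_cancel₀ _ hs, add_sub_cancel, Function.iterate_id] at hn

-- Iterating `p` times gives `k a = r ^ p * k a = r * k a`, so `s` is a period.
lemma apply_eq_of_apply_add_eq_mul {k : ZMod p → ZMod p} {s r : ZMod p} (hs : s ≠ 0)
    (h : ∀ a, k (a + s) = r * k a) (a b : ZMod p) : k a = k b := by
  refine apply_eq_of_apply_add_eq hs (fun a => ?_) a b
  have hp := apply_add_natCast_mul h p a
  rw [CharP.cast_eq_zero, zero_mul, add_zero, mul_left_iterate, ZMod.pow_card] at hp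
  exact (h a).trans hp.symm

lemma apply_eq_add_div_mul {c : ZMod p → ZMod p} {s δ : ZMod p} (hs : s ≠ 0)
    (h : ∀ a, c (a + s) = c a + δ) (x : ZMod p) : c x = c 0 + δ / s * x := by
  have hperiod (a : ZMod p) : c (a + s) - δ / s * (a + s) = c a - δ / s * a := by
    rw [h, mul_add, div_mul_cancel₀ _ hs]
    ring
  linear_combination apply_eq_of_apply_add_eq (k := fun x => c x - δ / s * x) hs hperiod x 0

lemma exists_coboundary (φ : ZMod p → ZMod p) :
    ∃ η : ZMod p → ZMod p, ∀ b, η (b + 1) = η b + φ b - if b = 0 then ∑ a, φ a else 0 := by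
  let S (c : ZMod p) := ∑ i ∈ Finset.range (c - 1).val, φ (i + 1)
  have hS {b : ZMod p} (hb : b ≠ 0) : S (b + 1) = S b + φ b := by
    have hpos : 1 ≤ b.val := Nat.one_le_iff_ne_zero.mpr ((ZMod.val_eq_zero b).not.mpr hb)
    have hval : (b + 1 - 1).val = (b - 1).val + 1 := by
      rw [add_sub_cancel_right, ZMod.val_sub (by rwa [ZMod.val_one]), ZMod.val_one,
        Nat.sub_add_cancel hpos]
    simp only [S, hval, Finset.sum_range_succ, ZMod.natCast_zmod_val, sub_add_cancel]
  refine ⟨S, fun b => ?_⟩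
  split_ifs with hb
  · -- Summing over `b` telescopes, which determines the defect at `b = 0`.
    have htelescope : ∑ a, (S (a + 1) - S a - φ a) = -∑ a, φ a := by
      rw [Finset.sum_sub_distrib, Finset.sum_sub_distrib,
        Fintype.sum_equiv (Equiv.addRight 1) (fun a => S (a + 1)) S fun _ => rfl, sub_self,
        zero_sub]
    rw [Finset.sum_eq_single_of_mem b (Finset.mem_univ b) fun a _ ha => ?_] at htelescope
    · linear_combination htelescope
    · rw [hS (hb ▸ ha)]
      ring
  · rw [hS hb, sub_zero]

end FunctionsOnZModPrime

section TriangularPermutations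

open Equiv

variable {A B : Type*} [AddGroup A] [AddGroup B]

/-- The permutation `(b, y) ↦ (b + s, y + φ b)`; these are the elements of `triangular A B`. -/
def skewShift (s : A) (φ : A → B) : Perm (A × B) :=
  Equiv.prodShear (Equiv.addRight s) fun b => Equiv.addRight (φ b)

lemma skewShift_apply (s : A) (φ : A → B) (b : A) (y : B) :
    skewShift s φ (b, y) = (b + s, y + φ b) := rfl

lemma skewShift_mul_skewShift (s t : A) (φ ψ : A → B) :
    skewShift s φ * skewShift t ψ = skewShift (t + s) fun b => ψ b + φ (b + t) :=
  Perm.ext fun v => Prod.ext (add_assoc v.1 t s) (add_assoc v.2 (ψ v.1) (φ (v.1 + t)))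

lemma skewShift_zero_zero : skewShift (0 : A) (0 : A → B) = 1 :=
  Perm.ext fun v => Prod.ext (add_zero v.1) (add_zero v.2)

/-- The group of all `skewShift`s, an iterated wreath product of two translation groups. -/
def triangular (A B : Type*) [AddGroup A] [AddGroup B] : Subgroup (Perm (A × B)) where
  carrier := {g | ∃ s φ, g = skewShift s φ}
  one_mem' := ⟨0, 0, skewShift_zero_zero.symm⟩
  mul_mem' := by
    rintro _ _ ⟨s, φ, rfl⟩ ⟨t, ψ, rfl⟩
    exact ⟨_, _, skewShift_mul_skewShift s t φ ψ⟩
  inv_mem' := by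
    rintro _ ⟨s, φ, rfl⟩
    refine ⟨-s, fun b => -φ (b - s), inv_eq_of_mul_eq_one_right ?_⟩
    rw [skewShift_mul_skewShift, ← skewShift_zero_zero]
    congr
    · exact neg_add_cancel s
    · exact funext fun b => by rw [← sub_eq_add_neg, neg_add_cancel, Pi.zero_apply]

lemma skewShift_zero_mul_skewShift_zero (φ ψ : A → B) :
    skewShift 0 φ * skewShift 0 ψ = skewShift 0 (ψ + φ) := by
  simp only [skewShift_mul_skewShift, add_zero, ← Pi.add_def]

lemma skewShift_zero_pow (φ : A → B) (n : ℕ) : skewShift 0 φ ^ n = skewShift 0 (n • φ) := by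
  induction n with
  | zero => rw [pow_zero, zero_nsmul, skewShift_zero_zero]
  | succ n ih => rw [pow_succ', ih, skewShift_zero_mul_skewShift_zero, succ_nsmul]

lemma exists_pow_skewShift_eq (s : A) (φ : A → B) (n : ℕ) :
    ∃ ψ, skewShift s φ ^ n = skewShift (n • s) ψ := by
  induction n with
  | zero => exact ⟨0, by rw [pow_zero, zero_nsmul, skewShift_zero_zero]⟩
  | succ n ih =>
    obtain ⟨ψ, hψ⟩ := ih
    exact ⟨_, by rw [pow_succ', hψ, skewShift_mul_skewShift, succ_nsmul]⟩

end TriangularPermutations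

section TriangularCoordinates

open Equiv

variable {p : ℕ} [hp : Fact p.Prime]

lemma exists_mem_center_orderOf_eq {G : Type*} [Group G] [Finite G] (hG : IsPGroup p G)
    {N : Subgroup G} [N.Normal] (hN : N ≠ ⊥) :
    ∃ z ∈ N, z ∈ Subgroup.center G ∧ orderOf z = p := by
  have hdvd : p ∣ Nat.card N :=
    (hG.to_subgroup N).card_eq_or_dvd.resolve_left fun h => hN (Subgroup.card_eq_one.mp h)
  have hG' : IsPGroup p (ConjAct G) := hG
  obtain ⟨z, hz, hz1⟩ := hG'.exists_fixed_point_of_prime_dvd_card_of_fixed_point N hdvd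
    (a := 1) fun g => smul_one g
  have hzc : (z : G) ∈ Subgroup.center G := Subgroup.mem_center_iff.mpr fun g => by
    have h := congrArg Subtype.val (hz (ConjAct.toConjAct g))
    rwa [ConjAct.Subgroup.val_conj_smul, ConjAct.toConjAct_smul, mul_inv_eq_iff_eq_mul] at h
  have hne : N ⊓ Subgroup.center G ≠ ⊥ := fun h =>
    hz1 (Subtype.ext (Subgroup.mem_bot.mp (h ▸ ⟨z.2, hzc⟩ : (z : G) ∈ (⊥ : Subgroup G))).symm)
  obtain ⟨w, hw⟩ := exists_prime_orderOf_dvd_card' p <|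
    (hG.to_subgroup (N ⊓ Subgroup.center G)).card_eq_or_dvd.resolve_left fun h =>
      hne (Subgroup.card_eq_one.mp h)
  exact ⟨w, w.2.1, w.2.2, (Subgroup.orderOf_coe w).trans hw⟩

lemma exists_surjective_hom_ker_ge {G : Type*} [Group G] [Finite G] (hG : IsPGroup p G)
    {S : Subgroup G} (hS : p ∣ S.index) :
    ∃ χ : G →* Multiplicative (ZMod p), Function.Surjective χ ∧ S ≤ χ.ker := by
  obtain ⟨n, hn⟩ := IsPGroup.iff_card.mp hG
  obtain ⟨m, hm⟩ := IsPGroup.iff_card.mp (hG.to_subgroup S)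
  have hdvd : p ^ (m + 1) ∣ p ^ n := by
    rw [← hn, ← S.card_mul_index, hm, pow_succ]
    exact mul_dvd_mul_left _ hS
  have hmn : m + 1 ≤ n := (Nat.pow_dvd_pow_iff_le_right hp.out.one_lt).mp hdvd
  obtain ⟨N, hN, hSN⟩ := Sylow.exists_subgroup_card_pow_prime_le p (n := m) (m := n - 1)
    (hn ▸ pow_dvd_pow p (Nat.sub_le n 1)) S hm (Nat.le_sub_one_of_lt hmn)
  have hindex : N.index = p := by
    refine Nat.eq_of_mul_eq_mul_left (pow_pos hp.out.pos (n - 1)) ?_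
    rw [← hN, N.card_mul_index, hn, hN, ← pow_succ, Nat.sub_add_cancel (by omega)]
  have hnormal : N.Normal := by
    refine Subgroup.normal_of_index_eq_minFac_card (hindex.trans ?_)
    rw [hn, hp.out.pow_minFac (by omega)]
  have hcyclic : IsCyclic (G ⧸ N) := isCyclic_of_prime_card (p := p) hindex
  have iso : G ⧸ N ≃* Multiplicative (ZMod p) := by
    have h := (zmodCyclicMulEquiv hcyclic).symm
    rwa [← Subgroup.index_eq_card, hindex] at h
  refine ⟨iso.toMonoidHom.comp (QuotientGroup.mk' N),
    iso.surjective.comp (QuotientGroup.mk'_surjective N), hSN.trans fun g hg => ?_⟩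
  rw [MonoidHom.mem_ker, MonoidHom.comp_apply, QuotientGroup.mk'_apply,
    (QuotientGroup.eq_one_iff g).mpr hg, map_one]

lemma exists_surjective_equivariant_zmod {G X : Type*} [Group G] [Finite G] [MulAction G X]
    [MulAction.IsPretransitive G X] [Nonempty X] (hG : IsPGroup p G) (hX : p ∣ Nat.card X) :
    ∃ f : X → ZMod p, Function.Surjective f ∧ ∀ g : G, ∃ s, ∀ x, f (g • x) = f x + s := by
  obtain ⟨x₀⟩ := ‹Nonempty X›
  obtain ⟨χ, hχ, hker⟩ := exists_surjective_hom_ker_ge hG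
    (hX.trans (MulAction.index_stabilizer_of_transitive G x₀).symm.dvd)
  choose γ hγ using MulAction.exists_smul_eq G x₀
  have hequiv (g : G) (x : X) : χ (γ (g • x)) = χ g * χ (γ x) := by
    have hmem : (g * γ x)⁻¹ * γ (g • x) ∈ χ.ker := hker <| by
      rw [MulAction.mem_stabilizer_iff, mul_smul, hγ, inv_smul_eq_iff, mul_smul, hγ]
    rw [← map_mul]
    exact (MonoidHom.eq_iff χ).mpr hmem
  refine ⟨fun x => (χ (γ x)).toAdd - (χ (γ x₀)).toAdd, fun b => ?_, fun g =>
    ⟨(χ g).toAdd, fun x => ?_⟩⟩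
  · obtain ⟨g, hg⟩ := hχ (.ofAdd b)
    exact ⟨g • x₀, by simp only [hequiv, hg, toAdd_mul, add_sub_cancel_right, toAdd_ofAdd]⟩
  · simp only [hequiv, toAdd_mul]
    ring

lemma exists_equiv_prod_of_free {X : Type*} [Finite X] (hX : Nat.card X = p ^ 2) {z : Perm X}
    (hz : z ^ p = 1) (hfree : ∀ x, z x ≠ x) {f : X → ZMod p} (hf : Function.Surjective f)
    (hfz : ∀ x, f (z x) = f x) :
    ∃ e : X ≃ ZMod p × ZMod p, (∀ x, (e x).1 = f x) ∧
      ∀ x (y : ZMod p), e ((z ^ y.val) x) = ((e x).1, (e x).2 + y) := by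
  choose σ hσ using hf
  have hfpow (n : ℕ) (x : X) : f ((z ^ n) x) = f x := by
    induction n with
    | zero => rfl
    | succ n ih => rw [pow_succ', Perm.mul_apply, hfz, ih]
  let F (v : ZMod p × ZMod p) : X := (z ^ v.2.val) (σ v.1)
  have hfF (v : ZMod p × ZMod p) : f (F v) = v.1 := (hfpow _ _).trans (hσ _)
  have hinj : Function.Injective F := by
    rintro ⟨b, y⟩ ⟨b', y'⟩ h
    obtain rfl : b = b' := (hfF (b, y)).symm.trans ((congrArg f h).trans (hfF (b', y')))
    have hperiod : Function.minimalPeriod z (σ b) = p := by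
      refine Function.minimalPeriod_eq_prime ?_ (hfree _)
      rw [Function.IsPeriodicPt, Perm.iterate_eq_pow, hz]
      rfl
    have hmem (a : ZMod p) : a.val ∈ Set.Iio (Function.minimalPeriod z (σ b)) := by
      rw [Set.mem_Iio, hperiod]
      exact ZMod.val_lt a
    have hval : y.val = y'.val :=
      Function.iterate_injOn_Iio_minimalPeriod (f := z) (hmem y) (hmem y')
        (by simpa only [Perm.iterate_eq_pow] using h)
    rw [ZMod.val_injective p hval]
  have hbij : Function.Bijective F := by
    rw [Nat.bijective_iff_injective_and_card]
    exact ⟨hinj, by rw [Nat.card_prod, Nat.card_zmod, hX, sq]⟩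
  let e := Equiv.ofBijective F hbij
  refine ⟨e.symm, fun x => ?_, fun x y => e.symm_apply_eq.mpr ?_⟩
  · rw [← hfF]
    exact congrArg f (e.apply_symm_apply x)
  · obtain ⟨⟨b, y'⟩, rfl⟩ := e.surjective x
    rw [e.symm_apply_apply]
    change (z ^ y.val) ((z ^ y'.val) (σ b)) = (z ^ (y' + y).val) (σ b)
    rw [add_comm, pow_val_add hz, Perm.mul_apply]

lemma permCongrHom_mem_triangular {X : Type*} {e : X ≃ ZMod p × ZMod p} {z g : Perm X}
    (hez : ∀ x (y : ZMod p), e ((z ^ y.val) x) = ((e x).1, (e x).2 + y)) (hg : Commute g z)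
    {s : ZMod p} (hs : ∀ x, (e (g x)).1 = (e x).1 + s) :
    e.permCongrHom g ∈ triangular (ZMod p) (ZMod p) := by
  refine ⟨s, fun b => (e (g (e.symm (b, 0)))).2, Perm.ext fun ⟨b, y⟩ => ?_⟩
  have hx : e.symm (b, y) = (z ^ y.val) (e.symm (b, 0)) := by
    rw [Equiv.symm_apply_eq, hez, apply_symm_apply, zero_add]
  change e (g (e.symm (b, y))) = _
  rw [hx, ← Perm.mul_apply, (hg.pow_right _).eq, Perm.mul_apply, hez, hs, apply_symm_apply,
    add_comm _ y]
  rfl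

lemma exists_free_mem_center_orderOf_eq {X : Type*} [Finite X] {G : Subgroup (Perm X)}
    (hG : IsPGroup p G) (htrans : ∀ x y, ∃ g ∈ G, g x = y) {N : Subgroup G} [N.Normal]
    (hN : N ≠ ⊥) : ∃ z ∈ N, (∀ g ∈ G, Commute g z.1) ∧ z.1 ^ p = 1 ∧ ∀ x, z.1 x ≠ x := by
  obtain ⟨z, hzN, hzc, hzp⟩ := exists_mem_center_orderOf_eq hG hN
  have hcomm (g : Perm X) (hg : g ∈ G) : Commute g z :=
    congrArg Subtype.val (Subgroup.mem_center_iff.mp hzc ⟨g, hg⟩)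
  refine ⟨z, hzN, hcomm, ?_, fun x hx => ?_⟩
  · rw [← Subgroup.coe_pow, ← hzp, pow_orderOf_eq_one, Subgroup.coe_one]
  · have hz1 : z = 1 := Subtype.ext <| Perm.ext fun y => by
      obtain ⟨g, hg, rfl⟩ := htrans x y
      rw [← Perm.mul_apply, ← (hcomm g hg).eq, Perm.mul_apply, hx]
      rfl
    exact hp.out.ne_one (hzp.symm.trans (orderOf_eq_one_iff.mpr hz1))

lemma exists_mem_ne_one_forall_apply_eq {X : Type*} (hX : Nat.card X = p ^ 2)
    {G : Subgroup (Perm X)} (htrans : ∀ x y, ∃ g ∈ G, g x = y) {f : X → ZMod p}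
    (hfG : ∀ g ∈ G, ∃ s, ∀ x, f (g x) = f x + s) : ∃ g ∈ G, g ≠ 1 ∧ ∀ x, f (g x) = f x := by
  obtain ⟨x, y, hfxy, hxy⟩ : ∃ x y, f x = f y ∧ x ≠ y := by
    refine Function.not_injective_iff.mp fun hinj => ?_
    have hle := Nat.card_le_card_of_injective f hinj
    rw [hX, Nat.card_zmod, sq] at hle
    exact absurd hle (Nat.not_le.mpr (lt_mul_self hp.out.one_lt))
  obtain ⟨g, hg, rfl⟩ := htrans x y
  obtain ⟨s, hs⟩ := hfG g hg
  rw [hs, left_eq_add] at hfxy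
  exact ⟨g, hg, fun h => hxy (by rw [h, Perm.one_apply]), fun x => by rw [hs, hfxy, add_zero]⟩

lemma exists_equiv_permCongrHom_mem_triangular {X : Type*} [Finite X] (hX : Nat.card X = p ^ 2)
    {G : Subgroup (Perm X)} (hG : IsPGroup p G) (htrans : ∀ x y, ∃ g ∈ G, g x = y) {f : X → ZMod p}
    (hf : Function.Surjective f) (hfG : ∀ g ∈ G, ∃ s, ∀ x, f (g x) = f x + s) :
    ∃ e : X ≃ ZMod p × ZMod p, (∀ x, (e x).1 = f x) ∧
      ∀ g ∈ G, e.permCongrHom g ∈ triangular (ZMod p) (ZMod p) := by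
  let K : Subgroup G :=
    { carrier := {g | ∀ x, f (g.1 x) = f x}
      one_mem' := fun x => rfl
      mul_mem' := fun {g h} hg hh x => (hg (h.1 x)).trans (hh x)
      inv_mem' := fun {g} hg x => by
        rw [← hg, Subgroup.coe_inv, Perm.coe_inv, apply_symm_apply] }
  have hKnormal : K.Normal := ⟨fun k hk g x => by
    obtain ⟨s, hs⟩ := hfG g g.2
    change f (g.1 (k.1 (g.1.symm x))) = f x
    rw [hs, hk, ← hs, apply_symm_apply]⟩
  have hK : K ≠ ⊥ := by
    obtain ⟨g, hg, hg1, hgf⟩ := exists_mem_ne_one_forall_apply_eq hX htrans hfG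
    intro hbot
    have hgK : (⟨g, hg⟩ : G) ∈ K := hgf
    rw [hbot, Subgroup.mem_bot] at hgK
    exact hg1 (congrArg Subtype.val hgK)
  obtain ⟨z, hzK, hcomm, hzp, hfree⟩ := exists_free_mem_center_orderOf_eq hG htrans hK
  obtain ⟨e, he, hez⟩ := exists_equiv_prod_of_free hX hzp hfree hf hzK
  refine ⟨e, he, fun g hg => ?_⟩
  obtain ⟨s, hs⟩ := hfG g hg
  exact permCongrHom_mem_triangular hez (hcomm g hg) fun x => by rw [he, he, hs]

end TriangularCoordinates

namespace CycleSet

open Equiv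

lemma indecomposable_iff_isPretransitive {X : Type*} {C : CycleSet X} :
    C.Indecomposable ↔ MulAction.IsPretransitive C.permGroup X :=
  ⟨fun h => ⟨fun x y => let ⟨g, hg, hgx⟩ := h x y; ⟨⟨g, hg⟩, hgx⟩⟩,
    fun h x y => let ⟨g, hgx⟩ := h.exists_smul_eq x y; ⟨g, g.2, hgx⟩⟩

section MultisetPerm

variable {X : Type*} (C : CycleSet X)

lemma sigma_apply (x y : X) : C.sigma x y = C.op x y := rfl

lemma sigma_mem_permGroup (x : X) : C.sigma x ∈ C.permGroup :=
  Subgroup.subset_closure ⟨x, rfl⟩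

lemma sigma_op_mul_sigma (x y : X) :
    C.sigma (C.op x y) * C.sigma x = C.sigma (C.op y x) * C.sigma y :=
  Perm.ext fun z => C.c1 x y z

instance leftCommutative_sigma_mul :
    LeftCommutative fun (x : X) (g : Perm X) => C.sigma (g x) * g where
  left_comm x y g := by
    simp only [Perm.mul_apply, sigma_apply, ← mul_assoc, sigma_op_mul_sigma]

/-- The permutation attached to a multiset of points, obtained by adding the points one at a time:
adding `x` to a multiset with permutation `g` multiplies `g` by `σ_{g x}`. By (C1) the order does
not matter. -/
noncomputable def multisetPerm (a : Multiset X) : Perm X :=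
  a.foldr (fun x g => C.sigma (g x) * g) 1

lemma multisetPerm_zero : C.multisetPerm 0 = 1 := rfl

lemma multisetPerm_cons (x : X) (a : Multiset X) :
    C.multisetPerm (x ::ₘ a) = C.sigma (C.multisetPerm a x) * C.multisetPerm a := by
  simp [multisetPerm]

lemma multisetPerm_singleton (x : X) : C.multisetPerm {x} = C.sigma x := by
  rw [← Multiset.cons_zero, multisetPerm_cons, multisetPerm_zero, Perm.one_apply, mul_one]

lemma multisetPerm_add (a b : Multiset X) :
    C.multisetPerm (a + b) = C.multisetPerm (b.map (C.multisetPerm a)) * C.multisetPerm a := by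
  induction b using Multiset.induction with
  | empty => simp [multisetPerm_zero]
  | cons x b ih =>
    rw [Multiset.add_cons, multisetPerm_cons, ih, Multiset.map_cons, multisetPerm_cons]
    simp [mul_assoc]

lemma multisetPerm_mem_permGroup (a : Multiset X) : C.multisetPerm a ∈ C.permGroup := by
  induction a using Multiset.induction with
  | empty => exact one_mem _
  | cons x b ih => rw [multisetPerm_cons]; exact mul_mem (C.sigma_mem_permGroup _) ih

lemma exists_multisetPerm_eq [Finite X] {g : Perm X} (hg : g ∈ C.permGroup) :
    ∃ a, C.multisetPerm a = g := by
  have hg' : g ∈ Submonoid.closure (Set.range C.sigma) := by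
    rwa [← Subgroup.closure_toSubmonoid_of_finite]
  induction hg' using Submonoid.closure_induction_left with
  | one => exact ⟨0, rfl⟩
  | mul_left x hx y hy ih =>
    obtain ⟨u, rfl⟩ := hx
    have hy' : y ∈ C.permGroup := by
      simpa using mul_mem (inv_mem (C.sigma_mem_permGroup u)) hg
    obtain ⟨a, rfl⟩ := ih hy'
    exact ⟨(C.multisetPerm a)⁻¹ u ::ₘ a, by simp [multisetPerm_cons]⟩

end MultisetPerm

section PermBrace

variable {X : Type*} (C : CycleSet X)

/-- The congruence identifying multisets of points with the same permutation. -/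
noncomputable def multisetCon : AddCon (Multiset X) where
  toSetoid := Setoid.ker C.multisetPerm
  add' {a b c d} h h' := by
    change C.multisetPerm a = C.multisetPerm b at h
    change C.multisetPerm c = C.multisetPerm d at h'
    change C.multisetPerm (a + c) = C.multisetPerm (b + d)
    rw [multisetPerm_add, h, ← multisetPerm_add, add_comm b c, multisetPerm_add, h',
      ← multisetPerm_add, add_comm]

/-- The additive group of the left brace on `𝒢(X)`: it is in bijection with `𝒢(X)` through
`PermBrace.perm`, and `𝒢(X)` acts on it by automorphisms, permuting the generators
`PermBrace.gen`. -/
def PermBrace : Type _ := C.multisetCon.Quotient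

namespace PermBrace

noncomputable instance : AddCommMonoid C.PermBrace :=
  inferInstanceAs (AddCommMonoid C.multisetCon.Quotient)

variable {C}

/-- The class of a multiset of points in the brace. -/
noncomputable def mk : Multiset X →+ C.PermBrace := AddCon.mk' C.multisetCon

lemma mk_surjective : Function.Surjective (mk (C := C)) := AddCon.mk'_surjective

lemma mk_eq_mk {a b : Multiset X} :
    mk (C := C) a = mk b ↔ C.multisetPerm a = C.multisetPerm b :=
  AddCon.eq C.multisetCon

/-- The canonical bijection from the brace to the permutation group. -/
noncomputable def perm (q : C.PermBrace) : C.permGroup :=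
  AddCon.liftOn q (fun a => ⟨C.multisetPerm a, C.multisetPerm_mem_permGroup a⟩)
    fun _ _ h => Subtype.ext h

lemma perm_zero : perm (0 : C.PermBrace) = 1 := rfl

lemma perm_injective : Function.Injective (perm (C := C)) := by
  intro q r h
  obtain ⟨a, rfl⟩ := mk_surjective q
  obtain ⟨b, rfl⟩ := mk_surjective r
  exact mk_eq_mk.mpr (congrArg Subtype.val h)

/-- The generator of the brace attached to a point. -/
noncomputable def gen (C : CycleSet X) (x : X) : C.PermBrace := mk {x}

lemma coe_perm_gen (x : X) : (perm (gen C x) : Perm X) = C.sigma x :=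
  C.multisetPerm_singleton x

lemma induction_add_gen {P : C.PermBrace → Prop} (zero : P 0)
    (add_gen : ∀ q x, P q → P (q + gen C x)) (q : C.PermBrace) : P q := by
  obtain ⟨a, rfl⟩ := mk_surjective q
  induction a using Multiset.induction with
  | empty => exact zero
  | cons x a ih =>
    rw [← Multiset.singleton_add, add_comm, map_add]
    exact add_gen _ _ ih

variable [Finite X]

lemma perm_surjective : Function.Surjective (perm (C := C)) := by
  rintro ⟨g, hg⟩
  obtain ⟨a, rfl⟩ := C.exists_multisetPerm_eq hg
  exact ⟨mk a, rfl⟩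

noncomputable instance : MulAction C.permGroup C.PermBrace where
  smul g q := AddCon.liftOn q (fun a => mk (a.map g.1)) fun a b h => by
    obtain ⟨c, hc⟩ := C.exists_multisetPerm_eq g.2
    have hadd (d : Multiset X) :
        C.multisetPerm (d.map g.1) = C.multisetPerm (d + c) * (C.multisetPerm c)⁻¹ := by
      rw [add_comm, multisetPerm_add, mul_inv_cancel_right, hc]
    rw [mk_eq_mk, hadd, hadd]
    exact congrArg (· * _) (C.multisetCon.add h (C.multisetCon.refl c))
  one_smul q := by
    obtain ⟨a, rfl⟩ := mk_surjective q
    exact congrArg mk (Multiset.map_id a)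
  mul_smul g h q := by
    obtain ⟨a, rfl⟩ := mk_surjective q
    exact congrArg mk (Multiset.map_map g.1 h.1 a).symm

lemma smul_mk (g : C.permGroup) (a : Multiset X) : g • mk (C := C) a = mk (a.map g.1) := rfl

noncomputable instance : DistribMulAction C.permGroup C.PermBrace where
  smul_zero _ := rfl
  smul_add g q r := by
    obtain ⟨a, rfl⟩ := mk_surjective q
    obtain ⟨b, rfl⟩ := mk_surjective r
    rw [← map_add, smul_mk, smul_mk, smul_mk, Multiset.map_add, map_add]

lemma smul_gen (g : C.permGroup) (x : X) : g • gen C x = gen C (g.1 x) := by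
  rw [gen, smul_mk, Multiset.map_singleton, gen]

lemma perm_add (q r : C.PermBrace) : perm (q + r) = perm (perm q • r) * perm q := by
  obtain ⟨a, rfl⟩ := mk_surjective q
  obtain ⟨b, rfl⟩ := mk_surjective r
  exact Subtype.ext (C.multisetPerm_add a b)

instance : Finite C.PermBrace := Finite.of_injective perm perm_injective

noncomputable instance : AddCommGroup C.PermBrace :=
  let _ : AddLeftCancelMonoid C.PermBrace :=
    { (inferInstance : AddCommMonoid C.PermBrace) with
      add_left_cancel := fun q r s h => by
        have hperm := congrArg perm h
        simp only [perm_add, mul_left_inj] at hperm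
        exact smul_left_cancel _ (perm_injective hperm) }
  { AddLeftCancelMonoid.addGroupOfFinite with add_comm := add_comm }

lemma card_eq_card_permGroup (C : CycleSet X) : Nat.card C.PermBrace = Nat.card C.permGroup :=
  Nat.card_eq_of_bijective perm ⟨perm_injective, perm_surjective⟩

lemma perm_mul_perm (q r : C.PermBrace) : perm r * perm q = perm (q + (perm q)⁻¹ • r) := by
  rw [perm_add, smul_inv_smul]

lemma inv_perm (q : C.PermBrace) : (perm q)⁻¹ = perm (-(perm q • q)) := by
  rw [inv_eq_iff_mul_eq_one, mul_eq_one_iff_eq_inv, eq_comm, inv_eq_iff_mul_eq_one, perm_mul_perm,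
    smul_neg, inv_smul_smul, add_neg_cancel, perm_zero]

lemma isIso_perm_of_forall_smul_eq {q : C.PermBrace} (hq : ∀ g : C.permGroup, g • q = q) :
    C.IsIso C (perm q : Perm X) := by
  refine ⟨Equiv.bijective _, fun x y => ?_⟩
  have h : perm (perm q • gen C x) * perm q = perm q * perm (gen C x) := by
    rw [← perm_add, add_comm, perm_add, hq]
  rw [smul_gen] at h
  simpa only [Subgroup.coe_mul, Perm.mul_apply, coe_perm_gen, sigma_apply] using
    congrArg (fun g : C.permGroup => (g : Perm X) y) h.symm

lemma exists_isIso_perm_of_isPGroup {p : ℕ} [Fact p.Prime] (hG : IsPGroup p C.permGroup)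
    {B : AddSubgroup C.PermBrace} (hB : B ≠ ⊥) (hinv : ∀ (g : C.permGroup), ∀ q ∈ B, g • q ∈ B) :
    ∃ q ∈ B, perm q ≠ 1 ∧ C.IsIso C (perm q : Perm X) := by
  let _ : MulAction C.permGroup B :=
    { smul := fun g q => ⟨g • q.1, hinv g q.1 q.2⟩
      one_smul := fun q => Subtype.ext (one_smul _ _)
      mul_smul := fun g h q => Subtype.ext (mul_smul _ _ _) }
  have hp : p ∣ Nat.card B := by
    obtain ⟨k, hk⟩ := IsPGroup.iff_card.mp hG
    have hdvd : Nat.card B ∣ p ^ k := by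
      rw [← hk, ← card_eq_card_permGroup]; exact B.card_addSubgroup_dvd_card
    obtain ⟨_ | j, -, hj⟩ := (Nat.dvd_prime_pow Fact.out).mp hdvd
    · exact absurd (AddSubgroup.card_eq_one.mp hj) hB
    · exact hj ▸ dvd_pow_self p j.succ_ne_zero
  have h0 : (0 : B) ∈ MulAction.fixedPoints C.permGroup B := fun g => Subtype.ext (smul_zero g)
  obtain ⟨q, hq, hne⟩ := hG.exists_fixed_point_of_prime_dvd_card_of_fixed_point B hp h0
  refine ⟨q.1, q.2, fun h => hne (Subtype.ext (perm_injective h).symm), ?_⟩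
  exact isIso_perm_of_forall_smul_eq fun g => congrArg Subtype.val (hq g)

lemma exists_isIso_of_permGroup_ne_bot {p : ℕ} [Fact p.Prime] (hG : IsPGroup p C.permGroup)
    (h : C.permGroup ≠ ⊥) : ∃ g ∈ C.permGroup, g ≠ 1 ∧ C.IsIso C g := by
  have hB : (⊤ : AddSubgroup C.PermBrace) ≠ ⊥ := fun hB =>
    h <| (Subgroup.eq_bot_iff_forall _).mpr fun g hg => by
      obtain ⟨q, hq⟩ := perm_surjective ⟨g, hg⟩
      rw [(AddSubgroup.mem_bot.mp (hB ▸ AddSubgroup.mem_top q) : q = 0), perm_zero] at hq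
      exact (congrArg Subtype.val hq).symm
  obtain ⟨q, -, hq1, hq⟩ :=
    exists_isIso_perm_of_isPGroup hG hB fun _ _ _ => AddSubgroup.mem_top _
  exact ⟨perm q, (perm q).2, fun h1 => hq1 (Subtype.ext h1), hq⟩

end PermBrace

end PermBrace

section Cable

variable {X : Type*} [Finite X] (C : CycleSet X)

open PermBrace

lemma perm_add_nsmul_gen (q : C.PermBrace) (n : ℕ) (x : X) :
    perm (q + n • gen C x) = perm (n • gen C ((perm q : Perm X) x)) * perm q := by
  rw [perm_add, smul_comm, smul_gen]

lemma perm_nsmul_gen_apply_self (n : ℕ) (x : X) :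
    (perm (n • gen C x) : Perm X) x = (fun x => C.op x x)^[n] x := by
  induction n with
  | zero => rw [zero_nsmul, perm_zero]; rfl
  | succ n ih =>
    have hsucc := C.perm_add_nsmul_gen (n • gen C x) 1 x
    rw [one_nsmul, one_nsmul] at hsucc
    rw [succ_nsmul, hsucc, Subgroup.coe_mul, Perm.mul_apply, ih, coe_perm_gen, sigma_apply,
      Function.iterate_succ_apply']

/-- The `n`-th cable of a cycle set: `σ_x` is replaced by the permutation of `n` copies of `x`. -/
noncomputable def cable (n : ℕ) : CycleSet X where
  op x y := (perm (n • gen C x) : Perm X) y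
  c1 x y z := by
    have hxy := C.perm_add_nsmul_gen (n • gen C x) n y
    rw [add_comm, C.perm_add_nsmul_gen (n • gen C y) n x] at hxy
    exact congrArg (fun g : C.permGroup => (g : Perm X) z) hxy.symm
  c2 _ := Equiv.bijective _
  c3 := by simpa only [perm_nsmul_gen_apply_self] using C.c3.iterate n

lemma cable_op (n : ℕ) (x y : X) : (C.cable n).op x y = (perm (n • gen C x) : Perm X) y := rfl

lemma sigma_cable (n : ℕ) (x : X) : (C.cable n).sigma x = (perm (n • gen C x) : Perm X) :=
  Perm.ext fun _ => rfl

variable {C} in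
lemma cable_op_comp {k m n : ℕ} (h : ∀ q : C.PermBrace, m • q + n • q = k • q) (x y : X) :
    (C.cable k).op x y = (C.cable n).op ((C.cable m).op x x) ((C.cable m).op x y) := by
  rw [cable_op, ← h, perm_add_nsmul_gen]; rfl

lemma cable_one : C.cable 1 = C := by
  have hop : (C.cable 1).op = C.op := by
    funext x y
    rw [cable_op, one_nsmul, coe_perm_gen, sigma_apply]
  cases C
  congr

lemma mem_permGroup_cable (n : ℕ) {g : Perm X} :
    g ∈ (C.cable n).permGroup ↔ ∃ q : C.PermBrace, (perm (n • q) : Perm X) = g := by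
  constructor
  · intro hg
    induction hg using Subgroup.closure_induction with
    | mem g hg =>
      obtain ⟨x, rfl⟩ := hg
      exact ⟨gen C x, (C.sigma_cable n x).symm⟩
    | one => exact ⟨0, by rw [smul_zero, perm_zero]; rfl⟩
    | mul g h _ _ hg hh =>
      obtain ⟨q, rfl⟩ := hg
      obtain ⟨r, rfl⟩ := hh
      rw [← Subgroup.coe_mul, perm_mul_perm, smul_comm, ← smul_add]
      exact ⟨_, rfl⟩
    | inv g _ hg =>
      obtain ⟨q, rfl⟩ := hg
      rw [← Subgroup.coe_inv, inv_perm, smul_comm, ← smul_neg]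
      exact ⟨_, rfl⟩
  · rintro ⟨q, rfl⟩
    induction q using induction_add_gen with
    | zero => rw [smul_zero, perm_zero]; exact one_mem _
    | add_gen q x ih =>
      rw [smul_add, perm_add_nsmul_gen, Subgroup.coe_mul, ← sigma_cable]
      exact mul_mem (sigma_mem_permGroup _ _) ih

lemma permGroup_cable_le (n : ℕ) : (C.cable n).permGroup ≤ C.permGroup := by
  intro g hg
  obtain ⟨q, rfl⟩ := (C.mem_permGroup_cable n).mp hg
  exact (perm _).2

lemma card_permGroup_cable (n : ℕ) :
    Nat.card (C.cable n).permGroup =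
      Nat.card (nsmulAddMonoidHom n : C.PermBrace →+ C.PermBrace).range := by
  have hmem (q : (nsmulAddMonoidHom n : C.PermBrace →+ C.PermBrace).range) :
      (perm q.1 : Perm X) ∈ (C.cable n).permGroup := by
    obtain ⟨_, r, rfl⟩ := q
    exact (C.mem_permGroup_cable n).mpr ⟨r, rfl⟩
  refine (Nat.card_eq_of_bijective (fun q => ⟨perm q.1, hmem q⟩) ⟨fun q r h => ?_, ?_⟩).symm
  · simp only [Subtype.mk.injEq, SetLike.coe_eq_coe] at h
    exact Subtype.ext (perm_injective h)
  · rintro ⟨g, hg⟩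
    obtain ⟨q, rfl⟩ := (C.mem_permGroup_cable n).mp hg
    exact ⟨⟨n • q, q, rfl⟩, rfl⟩

lemma relIndex_permGroup_cable (n : ℕ) :
    (C.cable n).permGroup.relIndex C.permGroup =
      Nat.card (nsmulAddMonoidHom n : C.PermBrace →+ C.PermBrace).ker := by
  have hrange := C.card_permGroup_cable n
  rw [← AddSubgroup.index_ker] at hrange
  refine Nat.eq_of_mul_eq_mul_left (Nat.card_pos (α := (C.cable n).permGroup)) ?_
  rw [← Subgroup.relIndex_bot_left, mul_comm, mul_comm,
    Subgroup.relIndex_mul_relIndex _ _ _ bot_le (C.permGroup_cable_le n),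
    Subgroup.relIndex_bot_left, ← card_eq_card_permGroup, Subgroup.relIndex_bot_left, hrange,
    mul_comm, AddSubgroup.card_mul_index]

lemma isPGroup_permGroup_cable {p j n : ℕ} [Fact p.Prime]
    (h : ∀ q : C.PermBrace, p ^ j • n • q = 0) : IsPGroup p (C.cable n).permGroup := by
  have hrange : IsPGroup p
      (Multiplicative (nsmulAddMonoidHom n : C.PermBrace →+ C.PermBrace).range) := by
    rintro ⟨_, q, rfl⟩
    exact ⟨j, Subtype.ext (h q)⟩
  rw [IsPGroup.iff_card] at hrange ⊢
  rwa [card_permGroup_cable]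

variable {C} in
lemma Indecomposable.cable (hC : C.Indecomposable) {n : ℕ}
    (hn : (Nat.card (nsmulAddMonoidHom n : C.PermBrace →+ C.PermBrace).ker).Coprime
      (Nat.card X)) : (C.cable n).Indecomposable := by
  rw [indecomposable_iff_isPretransitive] at hC
  rw [← relIndex_permGroup_cable] at hn
  have hH : MulAction.IsPretransitive ((C.cable n).permGroup.subgroupOf C.permGroup) X :=
    isPretransitive_of_coprime_index hn
  intro x y
  obtain ⟨⟨g, hg⟩, hgx⟩ := hH.exists_smul_eq x y
  exact ⟨g, Subgroup.mem_subgroupOf.mp hg, hgx⟩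

end Cable

section PrimaryDecomposition

variable {X : Type*}

/-- The mixed form of (C1) satisfied by any two cables of one cycle set. -/
def Compatible (D E : CycleSet X) : Prop :=
  ∀ x y z, E.op (D.op x y) (D.op x z) = D.op (E.op y x) (E.op y z)

/-- The cycle sets obtained, by composing permutations as for cables, from cycle sets which are
compatible with `D` and all of whose permutations fix a common point. -/
inductive FixedPointGenerated (D : CycleSet X) : CycleSet X → Prop
  | of_fixedPoint {E : CycleSet X} (hDE : D.Compatible E) {w : X} (hw : ∀ v, E.op v w = w) :
    FixedPointGenerated D E
  | comp {E E₁ E₂ : CycleSet X} (h₁ : FixedPointGenerated D E₁) (h₂ : FixedPointGenerated D E₂)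
    (h : ∀ u v, E.op u v = E₂.op (E₁.op u u) (E₁.op u v)) : FixedPointGenerated D E

variable [Finite X] (C : CycleSet X)

open PermBrace

lemma compatible_cable (m n : ℕ) : (C.cable m).Compatible (C.cable n) := by
  intro x y z
  have hxy := C.perm_add_nsmul_gen (m • gen C x) n y
  rw [add_comm, C.perm_add_nsmul_gen (n • gen C y) m x] at hxy
  exact congrArg (fun g : C.permGroup => (g : Perm X) z) hxy.symm

lemma fixedPointGenerated_cable {p r d : ℕ} [hp : Fact p.Prime] (hX : Nat.card X = p ^ r)
    (n : ℕ) (hd : ¬ p ∣ d) {k : ℕ} (hk : ∀ q : C.PermBrace, d • k • q = 0) :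
    (C.cable n).FixedPointGenerated (C.cable k) := by
  induction d using Nat.recOnPosPrimePosCoprime generalizing k with
  | zero => exact absurd (dvd_zero p) hd
  | one =>
    have : Nonempty X := (Nat.card_pos_iff.mp (hX ▸ pow_pos hp.out.pos r)).1
    refine .of_fixedPoint (C.compatible_cable n k) (w := Classical.arbitrary X) fun v => ?_
    rw [cable_op, ← one_nsmul (k • _), hk, perm_zero]
    rfl
  | prime_pow l j hl hj =>
    have : Fact l.Prime := ⟨hl⟩
    have hlX : ¬ l ∣ Nat.card X := fun h =>
      hd (((Nat.prime_dvd_prime_iff_eq hl hp.out).mp (hl.dvd_of_dvd_pow (hX ▸ h))) ▸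
        dvd_pow_self l hj.ne')
    obtain ⟨w, hw⟩ :=
      (C.isPGroup_permGroup_cable hk).nonempty_fixed_point_of_prime_not_dvd_card X hlX
    exact .of_fixedPoint (C.compatible_cable n k) fun v => hw ⟨_, sigma_mem_permGroup _ v⟩
  | coprime a b _ _ hab iha ihb =>
    obtain ⟨c, c', hbc, hac', hcc'⟩ := exists_modEq_orthogonal_idempotents hab
    have hzero {e f : ℕ} (hef : a * b ∣ e * f) (q : C.PermBrace) : e • (f * k) • q = 0 := by
      obtain ⟨t, ht⟩ := hef
      rw [← mul_nsmul', ← mul_assoc, ht, mul_assoc, mul_comm t, mul_nsmul', mul_nsmul' _ k t, hk]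
    refine .comp (iha (fun h => hd (h.mul_right b)) (hzero (mul_dvd_mul_left a hbc)))
      (ihb (fun h => hd (h.mul_left a))
        (hzero ((mul_comm a b).dvd.trans (mul_dvd_mul_left b hac'))))
      (cable_op_comp fun q => ?_)
    rw [← add_nsmul, ← add_mul, mul_nsmul', nsmul_eq_self_of_modEq_one (hk q) hcc']

variable {C} in
theorem Indecomposable.exists_isPGroup_fixedPointGenerated {p r : ℕ} [hp : Fact p.Prime]
    (hC : C.Indecomposable) (hX : Nat.card X = p ^ r) :
    ∃ D E : CycleSet X, IsPGroup p D.permGroup ∧ D.Indecomposable ∧ D.FixedPointGenerated E ∧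
      ∀ u v, C.op u v = E.op (D.op u u) (D.op u v) := by
  obtain ⟨k, m, hm, hN⟩ :=
    Nat.exists_eq_pow_mul_and_not_dvd (Nat.card_pos (α := C.PermBrace)).ne' p hp.out.ne_one
  have hkm : (p ^ k).Coprime m :=
    Nat.Coprime.pow_left k ((Nat.Prime.coprime_iff_not_dvd hp.out).mpr hm)
  obtain ⟨n, n', hmn, hpn', hnn'⟩ := exists_modEq_orthogonal_idempotents hkm
  have hzero {e f : ℕ} (hef : p ^ k * m ∣ e * f) (q : C.PermBrace) : e • f • q = 0 := by
    rw [← mul_nsmul', ← addOrderOf_dvd_iff_nsmul_eq_zero]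
    exact (addOrderOf_dvd_natCard q).trans (hN ▸ hef)
  have hn : ∀ q : C.PermBrace, p ^ k • n • q = 0 := hzero (mul_dvd_mul_left _ hmn)
  have hn' : ∀ q : C.PermBrace, m • n' • q = 0 :=
    hzero ((mul_comm _ _).dvd.trans (mul_dvd_mul_left m hpn'))
  have hsum (q : C.PermBrace) : n • q + n' • q = 1 • q := by
    rw [← add_nsmul, one_nsmul]
    refine nsmul_eq_self_of_modEq_one ?_ hnn'
    rw [← hN, card_nsmul_eq_zero']
  refine ⟨C.cable n, C.cable n', C.isPGroup_permGroup_cable hn, hC.cable ?_,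
    C.fixedPointGenerated_cable hX n hm hn', fun u v => ?_⟩
  · rw [hX]
    refine (coprime_card_of_forall_nsmul_eq_zero hm ?_).symm.pow_right r
    rintro ⟨q, hq : n • q = 0⟩
    have hq' : n' • q = q := by simpa only [hq, zero_add, one_nsmul] using hsum q
    refine Subtype.ext (?_ : m • q = 0)
    rw [← hq', hn']
  · rw [← cable_op_comp hsum, cable_one]

end PrimaryDecomposition

section Transport

variable {X Y Z : Type*}

/-- The cycle set structure on `Y` carried over from `X` along a bijection. -/
def transport (C : CycleSet X) (e : X ≃ Y) : CycleSet Y where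
  op u v := e (C.op (e.symm u) (e.symm v))
  c1 x y z := by simp only [symm_apply_apply, C.c1 (e.symm x)]
  c2 x := e.bijective.comp ((C.c2 _).comp e.symm.bijective)
  c3 := e.bijective.comp (C.c3.comp e.symm.bijective)

lemma transport_op (C : CycleSet X) (e : X ≃ Y) (u v : Y) :
    (C.transport e).op u v = e (C.op (e.symm u) (e.symm v)) := rfl

lemma transport_op_eq {C D E : CycleSet X} (h : ∀ u v, C.op u v = E.op (D.op u u) (D.op u v))
    (e : X ≃ Y) (u v : Y) : (C.transport e).op u v =
      (E.transport e).op ((D.transport e).op u u) ((D.transport e).op u v) := by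
  simp only [transport_op, symm_apply_apply, h]

lemma iso_transport (C : CycleSet X) (e : X ≃ Y) : C.Iso (C.transport e) :=
  ⟨e, e.bijective, fun x y => by simp only [transport_op, symm_apply_apply]⟩

lemma Iso.trans {C : CycleSet X} {D : CycleSet Y} {E : CycleSet Z} (h : C.Iso D) (h' : D.Iso E) :
    C.Iso E := by
  obtain ⟨f, hf, hfop⟩ := h
  obtain ⟨g, hg, hgop⟩ := h'
  exact ⟨g ∘ f, hg.comp hf, fun x y => by simp only [Function.comp_apply, hfop, hgop]⟩

lemma permGroup_transport (C : CycleSet X) (e : X ≃ Y) :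
    (C.transport e).permGroup = C.permGroup.map e.permCongrHom.toMonoidHom := by
  rw [permGroup, permGroup, MonoidHom.map_closure, ← Set.range_comp,
    ← e.symm.surjective.range_comp (e.permCongrHom.toMonoidHom ∘ C.sigma)]
  congr 2
  exact funext fun u => Perm.ext fun v => rfl

lemma isPGroup_permGroup_transport {p : ℕ} {C : CycleSet X} (e : X ≃ Y)
    (h : IsPGroup p C.permGroup) : IsPGroup p (C.transport e).permGroup := by
  rw [permGroup_transport]
  exact h.map _

lemma Indecomposable.transport {C : CycleSet X} (h : C.Indecomposable) (e : X ≃ Y) :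
    (C.transport e).Indecomposable := by
  intro x y
  obtain ⟨g, hg, hxy⟩ := h (e.symm x) (e.symm y)
  refine ⟨e.permCongrHom g, ?_, e.symm_apply_eq.mp hxy.symm |>.symm⟩
  rw [permGroup_transport]
  exact ⟨g, hg, rfl⟩

lemma Compatible.transport {D E : CycleSet X} (h : D.Compatible E) (e : X ≃ Y) :
    (D.transport e).Compatible (E.transport e) := fun x y z => by
  simp only [transport_op, symm_apply_apply, h (e.symm x)]

lemma FixedPointGenerated.transport {D E : CycleSet X} (h : D.FixedPointGenerated E) (e : X ≃ Y) :
    (D.transport e).FixedPointGenerated (E.transport e) := by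
  induction h with
  | of_fixedPoint hDE hw =>
    exact .of_fixedPoint (hDE.transport e) fun v => by
      rw [transport_op, symm_apply_apply, hw]
  | comp _ _ h ih₁ ih₂ =>
    exact .comp ih₁ ih₂ (transport_op_eq h e)

end Transport

section OrbitInduction

variable {X : Type*} {C : CycleSet X}

lemma Indecomposable.eq_univ_of_forall_op_mem [Finite X] (hC : C.Indecomposable) {s : Set X}
    (hs : s.Nonempty) (h : ∀ u, ∀ v ∈ s, C.op u v ∈ s) : s = Set.univ := by
  obtain ⟨x, hx⟩ := hs
  have hmaps (g : Perm X) (hg : g ∈ C.permGroup) : ∀ v ∈ s, g v ∈ s := by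
    rw [permGroup, ← Subgroup.mem_toSubmonoid, Subgroup.closure_toSubmonoid_of_finite] at hg
    induction hg using Submonoid.closure_induction with
    | mem _ hg => obtain ⟨u, rfl⟩ := hg; exact h u
    | one => exact fun v hv => hv
    | mul _ _ _ _ hg hg' => exact fun v hv => hg _ (hg' v hv)
  refine Set.eq_univ_of_forall fun y => ?_
  obtain ⟨g, hg, rfl⟩ := hC x y
  exact hmaps g hg x hx

lemma Indecomposable.apply_eq_of_forall_op [Finite X] {α : Type*} (hC : C.Indecomposable)
    {f : X → α} (h : ∀ u v, f (C.op u v) = f v) (x y : X) : f x = f y :=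
  Set.eq_univ_iff_forall.mp
    (hC.eq_univ_of_forall_op_mem (s := {z | f z = f y}) ⟨y, rfl⟩ fun u v hv => (h u v).trans hv) x

end OrbitInduction

section TranslationCycleSet

-- The maps `y ↦ y + k x` form a cycle set whose permutation group is a `p`-group of translations;
-- one of these translations is an automorphism, and its amount is a period of `k`.
lemma apply_eq_of_translation_identity {p : ℕ} [Fact p.Prime] {k : ZMod p → ZMod p}
    (hk : ∀ a b, k a + k (b + k a) = k b + k (a + k b))
    (hbij : Function.Bijective fun a => a + k a) (a b : ZMod p) : k a = k b := by
  let C : CycleSet (ZMod p) :=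
    { op := fun a b => b + k a
      c1 := fun x y z => by linear_combination hk x y
      c2 := fun x => (Equiv.addRight (k x)).bijective
      c3 := hbij }
  let τ := MulAction.toPermHom (Multiplicative (ZMod p)) (ZMod p)
  have hτ (s x : ZMod p) : τ (.ofAdd s) x = x + s := add_comm s x
  have hle : C.permGroup ≤ τ.range := by
    rw [permGroup, Subgroup.closure_le]
    rintro _ ⟨u, rfl⟩
    exact ⟨.ofAdd (k u), Perm.ext fun x => hτ (k u) x⟩
  have hpgroup : IsPGroup p C.permGroup := by
    have hcard : Nat.card (Multiplicative (ZMod p)) = p ^ 1 := by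
      rw [pow_one]; exact Nat.card_zmod p
    exact ((IsPGroup.of_card hcard).of_surjective τ.rangeRestrict
      τ.rangeRestrict_surjective).to_le hle
  by_cases hbot : C.permGroup = ⊥
  · have hk0 (u : ZMod p) : k u = 0 := by
      have hσ : C.sigma u = 1 := Subgroup.mem_bot.mp (hbot ▸ C.sigma_mem_permGroup u)
      have h := congrArg (fun g : Perm (ZMod p) => g 0) hσ
      exact (zero_add (k u)).symm.trans h
    rw [hk0, hk0]
  obtain ⟨t, ht, ht1, -, haut⟩ := PermBrace.exists_isIso_of_permGroup_ne_bot hpgroup hbot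
  obtain ⟨s, rfl⟩ := hle ht
  have hs0 : s.toAdd ≠ 0 := fun h0 => ht1 (by rw [toAdd_eq_zero.mp h0, map_one])
  refine apply_eq_of_apply_add_eq hs0 (fun u => ?_) a b
  have h := haut u 0
  change τ (.ofAdd s.toAdd) (0 + k u) = τ (.ofAdd s.toAdd) 0 + k (τ (.ofAdd s.toAdd) u) at h
  simp only [hτ] at h
  linear_combination -h

end TranslationCycleSet

section Grading

lemma exists_op_eq_of_permGroup_le_triangular {A B : Type*} [AddGroup A] [AddGroup B]
    {D : CycleSet (A × B)} (hD : D.permGroup ≤ triangular A B) :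
    ∃ (c : A × B → A) (F : A × B → A → B), ∀ u b y, D.op u (b, y) = (b + c u, y + F u b) := by
  choose c F h using fun u => hD (D.sigma_mem_permGroup u)
  exact ⟨c, F, fun u b y => congrArg (fun g : Perm (A × B) => g (b, y)) (h u)⟩

variable {p : ℕ}

/-- A function on `X` which every `σ_u` raises by one. -/
def IsGrading {X : Type*} (C : CycleSet X) (f : X → ZMod p) : Prop :=
  ∀ u v, f (C.op u v) = f v + 1

variable [Fact p.Prime]

lemma Indecomposable.exists_isGrading {X : Type*} [Finite X] {C : CycleSet X}
    (hC : C.Indecomposable) {f : X → ZMod p} {c : ZMod p} (hf : ∀ u v, f (C.op u v) = f v + c)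
    {x y : X} (hxy : f x ≠ f y) : ∃ f' : X → ZMod p, C.IsGrading f' := by
  have hc : c ≠ 0 := by
    rintro rfl
    exact hxy (hC.apply_eq_of_forall_op (fun u v => (hf u v).trans (add_zero _)) x y)
  exact ⟨fun v => f v / c, fun u v => by simp only [hf, add_div, div_self hc]⟩

lemma Indecomposable.exists_isGrading_of_fst_op {D : CycleSet (ZMod p × ZMod p)}
    (hD : D.Indecomposable) {c : ZMod p → ZMod p} (hc : ∀ a x v, (D.op (a, x) v).1 = v.1 + c a) :
    ∃ f : ZMod p × ZMod p → ZMod p, D.IsGrading f := by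
  have hconst : ∀ a b, c a = c b := by
    refine apply_eq_of_translation_identity (fun a b => ?_) ?_
    · have h := congrArg Prod.fst (D.c1 (a, 0) (b, 0) (0, 0))
      have hop (u v : ZMod p × ZMod p) : (D.op u v).1 = v.1 + c u.1 := hc u.1 u.2 v
      simp only [hop] at h
      linear_combination h
    · refine Finite.injective_iff_bijective.mp (Finite.injective_iff_surjective.mpr fun b => ?_)
      obtain ⟨⟨a, x⟩, hu⟩ := D.c3.2 (b, 0)
      exact ⟨a, (hc a x (a, x)).symm.trans (congrArg Prod.fst hu)⟩
  refine hD.exists_isGrading (f := Prod.fst) (c := c 0) (x := (0, 0)) (y := (1, 0)) ?_ zero_ne_one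
  rintro ⟨a, x⟩ v
  rw [hc, hconst a 0]

lemma Indecomposable.exists_isGrading_of_isIso_skewShift {D : CycleSet (ZMod p × ZMod p)}
    (hD : D.Indecomposable) (htri : D.permGroup ≤ triangular (ZMod p) (ZMod p))
    {φ : ZMod p → ZMod p} (hφ : φ ≠ 0) (haut : D.IsIso D (skewShift 0 φ)) :
    ∃ f : ZMod p × ZMod p → ZMod p, D.IsGrading f := by
  obtain ⟨c, F, hop⟩ := exists_op_eq_of_permGroup_le_triangular htri
  have hc (a x : ZMod p) : c (a, x + φ a) = c (a, x) := by
    have h := congrArg Prod.fst (haut.2 (a, x) (0, 0))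
    simp only [hop, skewShift_apply] at h
    simpa using h.symm
  have hF (a x b : ZMod p) : F (a, x + φ a) b + φ b = F (a, x) b + φ (b + c (a, x)) := by
    have h := congrArg Prod.snd (haut.2 (a, x) (b, 0))
    simp only [hop, skewShift_apply, add_zero] at h
    linear_combination -h
  have hc0 (a x : ZMod p) : c (a, x) = c (a, 0) := by
    by_cases ha : φ a = 0
    · have hzero (x : ZMod p) : c (a, x) = 0 := by
        by_contra hne
        refine hφ (funext fun b => ?_)
        rw [Pi.zero_apply, ← ha]
        refine apply_eq_of_apply_add_eq hne (fun b => ?_) b a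
        have h := hF a x b
        rw [ha, add_zero] at h
        linear_combination -h
      rw [hzero, hzero]
    · exact apply_eq_of_apply_add_eq (k := fun x => c (a, x)) ha (hc a) x 0
  exact hD.exists_isGrading_of_fst_op (c := fun a => c (a, 0)) fun a x v => by
    rw [← hc0 a x]
    exact congrArg Prod.fst (hop (a, x) v.1 v.2)

end Grading

section ShiftForm

variable {p : ℕ}

/-- The operation of `D` in coordinates for which `𝒢(D)` is triangular and the translation
`(b, y) ↦ (b + 1, y)` is an automorphism. -/
def IsShiftForm (D : CycleSet (ZMod p × ZMod p)) (c : ZMod p → ZMod p)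
    (Φ : ZMod p → ZMod p → ZMod p) : Prop :=
  ∀ a x b y, D.op (a, x) (b, y) = (b + c x, y + Φ x (b - a))

variable [Fact p.Prime] {D : CycleSet (ZMod p × ZMod p)}

lemma exists_forall_add_one_eq_of_skewShift_pow_eq_one {s : ZMod p} {φ : ZMod p → ZMod p}
    (hp : skewShift s φ ^ p = 1) : ∃ ρ : ZMod p → ZMod p, ∀ c, ρ (c + 1) = ρ c + φ (c * s) := by
  have horbit (c : ZMod p) : ((skewShift s φ ^ c.val) (0, 0)).1 = c * s := by
    obtain ⟨ψ, hψ⟩ := exists_pow_skewShift_eq s φ c.val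
    rw [hψ, skewShift_apply, zero_add, nsmul_eq_mul, ZMod.natCast_zmod_val]
  refine ⟨fun c => ((skewShift s φ ^ c.val) (0, 0)).2, fun c => ?_⟩
  dsimp only
  rw [add_comm c, pow_val_add hp, ZMod.val_one, pow_one, Perm.mul_apply, ← horbit c]
  rfl

lemma exists_isShiftForm_of_isIso_skewShift_one
    (htri : D.permGroup ≤ triangular (ZMod p) (ZMod p)) (haut : D.IsIso D (skewShift 1 0)) :
    ∃ c Φ, D.IsShiftForm c Φ := by
  obtain ⟨c, F, hop⟩ := exists_op_eq_of_permGroup_le_triangular htri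
  refine ⟨fun x => c (0, x), fun x => F (0, x), fun a x b y => ?_⟩
  have hc (a : ZMod p) : c (a + 1, x) = c (a, x) := by
    have h := congrArg Prod.fst (haut.2 (a, x) (0, 0))
    simp only [hop, skewShift_apply, Pi.zero_apply, add_zero] at h
    linear_combination -h
  have hF (d a : ZMod p) : F (a + 1, x) (d + (a + 1)) = F (a, x) (d + a) := by
    have h := congrArg Prod.snd (haut.2 (a, x) (d + a, 0))
    simp only [hop, skewShift_apply, Pi.zero_apply, add_zero, add_assoc] at h
    linear_combination -h
  have hc0 : c (a, x) = c (0, x) :=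
    apply_eq_of_apply_add_eq (k := fun a => c (a, x)) one_ne_zero hc a 0
  have hF0 : F (a, x) (b - a + a) = F (0, x) (b - a + 0) :=
    apply_eq_of_apply_add_eq (k := fun a' => F (a', x) (b - a + a')) one_ne_zero (hF (b - a)) a 0
  rw [sub_add_cancel, add_zero] at hF0
  rw [hop, hc0, hF0]

lemma exists_isShiftForm_of_isIso_skewShift
    (htri : D.permGroup ≤ triangular (ZMod p) (ZMod p)) {s : ZMod p} (hs : s ≠ 0)
    {φ : ZMod p → ZMod p} (hp : skewShift s φ ^ p = 1) (haut : D.IsIso D (skewShift s φ)) :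
    ∃ (e : ZMod p × ZMod p ≃ ZMod p × ZMod p) (c : ZMod p → ZMod p)
      (Φ : ZMod p → ZMod p → ZMod p), (D.transport e).IsShiftForm c Φ := by
  obtain ⟨ρ, hρ⟩ := exists_forall_add_one_eq_of_skewShift_pow_eq_one hp
  let e : ZMod p × ZMod p ≃ ZMod p × ZMod p :=
    { toFun := fun v => (v.1 / s, v.2 - ρ (v.1 / s))
      invFun := fun v => (v.1 * s, v.2 + ρ v.1)
      left_inv := fun v => Prod.ext (div_mul_cancel₀ _ hs) (sub_add_cancel _ _)
      right_inv := fun v => by simp [hs] }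
  have he (v : ZMod p × ZMod p) : e.symm (skewShift 1 0 v) = skewShift s φ (e.symm v) := by
    refine Prod.ext (add_one_mul v.1 s) ?_
    change v.2 + 0 + ρ (v.1 + 1) = v.2 + ρ v.1 + φ (v.1 * s)
    rw [hρ, add_zero, add_assoc]
  refine ⟨e, exists_isShiftForm_of_isIso_skewShift_one ?_ ⟨Equiv.bijective _, fun u v => ?_⟩⟩
  · rw [permGroup_transport]
    rintro _ ⟨g, hg, rfl⟩
    obtain ⟨s', φ', rfl⟩ := htri hg
    refine ⟨s' / s, fun b => ρ b + φ' (b * s) - ρ (b + s' / s), Perm.ext fun ⟨b, y⟩ => ?_⟩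
    have hfst : (b * s + s') / s = b + s' / s := by rw [add_div, mul_div_cancel_right₀ _ hs]
    refine Prod.ext hfst ?_
    change y + ρ b + φ' (b * s) - ρ ((b * s + s') / s) =
      y + (ρ b + φ' (b * s) - ρ (b + s' / s))
    rw [hfst]
    ring
  · rw [transport_op, transport_op, he, he, ← haut.2, ← e.symm_apply_eq, he, symm_apply_apply]

namespace IsShiftForm

variable {c : ZMod p → ZMod p} {Φ : ZMod p → ZMod p → ZMod p}

lemma c1_fst (h : D.IsShiftForm c Φ) (x y d : ZMod p) :
    c x + c (y + Φ x d) = c y + c (x + Φ y (-d)) := by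
  have h1 := congrArg Prod.fst (D.c1 (0, x) (d, y) (0, 0))
  simp only [h _ _ _ _, sub_zero, zero_sub] at h1
  linear_combination h1

lemma c1_snd (h : D.IsShiftForm c Φ) (x y d d' : ZMod p) :
    Φ x d' + Φ (y + Φ x d) (d' - d) = Φ y (d' - d) + Φ (x + Φ y (-d)) d' := by
  have h1 := congrArg Prod.snd (D.c1 (0, x) (d, y) (d', 0))
  simp only [h _ _ _ _, sub_zero, zero_sub, zero_add, add_sub_add_right_eq_sub,
    add_sub_cancel_right] at h1
  linear_combination h1

lemma apply_zero_right (h : D.IsShiftForm c Φ) (x : ZMod p) : Φ x 0 = Φ 0 0 := by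
  refine apply_eq_of_translation_identity (k := fun x => Φ x 0) (fun x y => ?_) ?_ x 0
  · simpa using h.c1_snd x y 0 0
  · refine Finite.injective_iff_bijective.mp (Finite.injective_iff_surjective.mpr fun y => ?_)
    obtain ⟨⟨a, x⟩, hu⟩ := D.c3.2 (0, y)
    have hsnd := congrArg Prod.snd hu
    simp only [h _ _ _ _, sub_self] at hsnd
    exact ⟨x, hsnd⟩

lemma apply_eq_apply_zero_left (h : D.IsShiftForm c Φ) (hc : ∃ x, c x ≠ c 0) (h0 : Φ 0 0 = 0)
    (x d : ZMod p) : Φ x d = Φ 0 d := by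
  have hperiod (x y : ZMod p) : Φ (x + Φ y (-d)) d = Φ x d := by
    have h1 := h.c1_snd x y d d
    rw [sub_self, h.apply_zero_right, h.apply_zero_right y, h0] at h1
    linear_combination -h1
  by_cases hd : ∃ y, Φ y (-d) ≠ 0
  · obtain ⟨y, hy⟩ := hd
    exact apply_eq_of_apply_add_eq (k := fun x => Φ x d) hy (fun x => hperiod x y) x 0
  · push Not at hd
    have hzero (x : ZMod p) : Φ x d = 0 := by
      by_contra hne
      obtain ⟨x', hx'⟩ := hc
      refine hx' (apply_eq_of_apply_add_eq hne (fun y => ?_) x' 0)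
      have h1 := h.c1_fst x y d
      rw [hd, add_zero] at h1
      linear_combination h1
    rw [hzero, hzero]

lemma exists_apply_ne_zero (h : D.IsShiftForm c Φ) (hD : D.Indecomposable) :
    ∃ x d, Φ x d ≠ 0 := by
  by_contra! hΦ
  refine zero_ne_one (hD.apply_eq_of_forall_op (f := Prod.snd) ?_ (0, 0) (0, 1) : (0 : ZMod p) = 1)
  rintro ⟨a, x⟩ ⟨b, y⟩
  rw [h a x b y, hΦ, add_zero]

lemma exists_forall_eq_add_mul (h : D.IsShiftForm c Φ) (hD : D.Indecomposable)
    (hc : ∃ x, c x ≠ c 0) : ∃ κ ≠ 0, ∀ x, c x = c 0 + κ * x := by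
  obtain ⟨d, hd, hΦ⟩ : ∃ d, Φ 0 d ≠ 0 ∧ ∀ x, Φ x (-d) = Φ 0 (-d) := by
    by_cases h0 : Φ 0 0 = 0
    · obtain ⟨x, d, hd⟩ := h.exists_apply_ne_zero hD
      have hΦ := h.apply_eq_apply_zero_left hc h0
      exact ⟨d, hΦ x d ▸ hd, fun x => hΦ x (-d)⟩
    · exact ⟨0, h0, neg_zero (G := ZMod p) |>.symm ▸ h.apply_zero_right⟩
  have haffine := apply_eq_add_div_mul (c := c) (δ := c (Φ 0 (-d)) - c 0) hd fun x => by
    have h1 := h.c1_fst 0 x d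
    rw [hΦ, zero_add] at h1
    linear_combination h1
  refine ⟨_, fun hκ => ?_, haffine⟩
  obtain ⟨x, hx⟩ := hc
  exact hx (by rw [haffine, hκ, zero_mul, add_zero])

lemma apply_eq_apply_neg (h : D.IsShiftForm c Φ) {κ : ZMod p} (hκ : κ ≠ 0)
    (hc : ∀ x, c x = c 0 + κ * x) (x y d : ZMod p) : Φ x d = Φ y (-d) := by
  have h1 := h.c1_fst x y d
  rw [hc x, hc (y + _), hc y, hc (x + _)] at h1
  exact mul_left_cancel₀ hκ (by linear_combination h1)

-- If `c` is not constant, then it is affine and serves as the second coordinate.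
lemma exists_isGrading_or_exists_transport_op (h : D.IsShiftForm c Φ) (hD : D.Indecomposable) :
    (∃ f : ZMod p × ZMod p → ZMod p, D.IsGrading f) ∨
      ∃ (e : ZMod p × ZMod p ≃ ZMod p × ZMod p) (Ψ : ZMod p → ZMod p), (∃ i j, Ψ i ≠ Ψ j) ∧
        (∀ d, Ψ (-d) = Ψ d) ∧
          ∀ a x b y, (D.transport e).op (a, x) (b, y) = (b + x, y + Ψ (b - a)) := by
  by_cases hc : ∃ x, c x ≠ c 0
  swap
  · push Not at hc
    exact .inl <| hD.exists_isGrading_of_fst_op (c := fun _ => c 0) fun a x v =>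
      (congrArg Prod.fst (h a x v.1 v.2)).trans (by rw [hc])
  obtain ⟨κ, hκ, hcκ⟩ := h.exists_forall_eq_add_mul hD hc
  have heven := h.apply_eq_apply_neg hκ hcκ
  have hΦ (x d : ZMod p) : Φ x d = Φ 0 d := (heven x 0 d).trans (heven 0 0 d).symm
  by_cases hconst : ∀ i j, Φ 0 i = Φ 0 j
  · refine .inl <| hD.exists_isGrading (f := Prod.snd) (c := Φ 0 0) (x := (0, 0)) (y := (0, 1)) ?_
      zero_ne_one
    rintro ⟨a, x⟩ ⟨b, y⟩
    rw [h a x b y, hΦ, hconst _ 0]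
  · push Not at hconst
    obtain ⟨i, j, hij⟩ := hconst
    let e : ZMod p × ZMod p ≃ ZMod p × ZMod p := Equiv.prodCongr (Equiv.refl _)
      ((Equiv.mulLeft₀ κ hκ).trans (Equiv.addLeft (c 0)))
    refine .inr ⟨e, fun d => κ * Φ 0 d, ⟨i, j, fun hij' => hij (mul_left_cancel₀ hκ hij')⟩,
      fun d => congrArg (κ * ·) (heven 0 0 d).symm, fun a x b y => ?_⟩
    obtain ⟨x, rfl⟩ := ((Equiv.mulLeft₀ κ hκ).trans (Equiv.addLeft (c 0))).surjective x
    obtain ⟨y, rfl⟩ := ((Equiv.mulLeft₀ κ hκ).trans (Equiv.addLeft (c 0))).surjective y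
    change (D.transport e).op (e (a, x)) (e (b, y)) = (b + (c 0 + κ * x), c 0 + κ * y + κ * _)
    rw [transport_op, symm_apply_apply, symm_apply_apply, h a x b y, hΦ, hcκ]
    refine Prod.ext rfl ?_
    change c 0 + κ * (y + Φ 0 (b - a)) = _
    ring

end IsShiftForm

end ShiftForm

section PGroupCase

variable {X : Type*} {C : CycleSet X} {p : ℕ}

lemma isIso_pow {g : Perm X} (hg : C.IsIso C g) (n : ℕ) : C.IsIso C (g ^ n : Perm X) := by
  refine ⟨Equiv.bijective _, ?_⟩
  induction n with
  | zero => exact fun x y => rfl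
  | succ n ih => exact fun x y => by simp only [pow_succ', Perm.mul_apply, ih, hg.2]

lemma Indecomposable.permGroup_ne_bot [Nontrivial X] (hC : C.Indecomposable) :
    C.permGroup ≠ ⊥ := by
  intro hbot
  obtain ⟨x, y, hxy⟩ := exists_pair_ne X
  obtain ⟨g, hg, rfl⟩ := hC x y
  rw [hbot, Subgroup.mem_bot] at hg
  exact hxy (by rw [hg, Perm.one_apply])

lemma IsGrading.of_transport {Y : Type*} {e : X ≃ Y} {f : Y → ZMod p}
    (hf : (C.transport e).IsGrading f) : C.IsGrading (f ∘ e) := fun u v => by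
  simpa only [Function.comp_apply, transport_op, symm_apply_apply] using hf (e u) (e v)

variable [hp : Fact p.Prime]

lemma Indecomposable.exists_permGroup_transport_le_triangular [Finite X] (hC : C.Indecomposable)
    (hX : Nat.card X = p ^ 2) (hG : IsPGroup p C.permGroup) {f : X → ZMod p}
    (hf : Function.Surjective f) (hfG : ∀ g ∈ C.permGroup, ∃ s, ∀ x, f (g x) = f x + s) :
    ∃ e : X ≃ ZMod p × ZMod p, (∀ x, (e x).1 = f x) ∧
      (C.transport e).permGroup ≤ triangular (ZMod p) (ZMod p) := by
  obtain ⟨e, hef, he⟩ := exists_equiv_permCongrHom_mem_triangular hX hG hC hf hfG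
  refine ⟨e, hef, ?_⟩
  rw [permGroup_transport]
  rintro _ ⟨g, hg, rfl⟩
  exact he g hg

lemma Indecomposable.exists_isGrading_or_exists_isShiftForm {D : CycleSet (ZMod p × ZMod p)}
    (hD : D.Indecomposable) (hG : IsPGroup p D.permGroup)
    (htri : D.permGroup ≤ triangular (ZMod p) (ZMod p)) :
    (∃ f : ZMod p × ZMod p → ZMod p, D.IsGrading f) ∨
      ∃ (e : ZMod p × ZMod p ≃ ZMod p × ZMod p) (c : ZMod p → ZMod p)
        (Φ : ZMod p → ZMod p → ZMod p), (D.transport e).IsShiftForm c Φ := by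
  obtain ⟨t, ht, ht1, haut⟩ := PermBrace.exists_isIso_of_permGroup_ne_bot hG hD.permGroup_ne_bot
  have hgrading {ψ : ZMod p → ZMod p} (h1 : skewShift 0 ψ ≠ 1)
      (h : D.IsIso D (skewShift 0 ψ)) : ∃ f : ZMod p × ZMod p → ZMod p, D.IsGrading f :=
    hD.exists_isGrading_of_isIso_skewShift htri
      (fun hψ => h1 (by rw [hψ, skewShift_zero_zero])) h
  obtain ⟨s, φ, rfl⟩ := htri ht
  rcases eq_or_ne s 0 with rfl | hs
  · exact .inl (hgrading ht1 haut)
  by_cases htp : skewShift s φ ^ p = 1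
  · exact .inr (exists_isShiftForm_of_isIso_skewShift htri hs htp haut)
  · obtain ⟨ψ, hψ⟩ := exists_pow_skewShift_eq s φ p
    rw [nsmul_eq_mul, CharP.cast_eq_zero, zero_mul] at hψ
    exact .inl (hgrading (hψ ▸ htp) (hψ ▸ isIso_pow haut p))

theorem Indecomposable.exists_isGrading_or_exists_transport_op [Finite X] (hC : C.Indecomposable)
    (hX : Nat.card X = p ^ 2) (hG : IsPGroup p C.permGroup) :
    (∃ f : X → ZMod p, C.IsGrading f) ∨
      ∃ (e : X ≃ ZMod p × ZMod p) (Ψ : ZMod p → ZMod p), (∃ i j, Ψ i ≠ Ψ j) ∧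
        (∀ d, Ψ (-d) = Ψ d) ∧
          ∀ a x b y, (C.transport e).op (a, x) (b, y) = (b + x, y + Ψ (b - a)) := by
  have : Nonempty X := (Nat.card_pos_iff.mp (hX ▸ pow_pos hp.out.pos 2)).1
  have : MulAction.IsPretransitive C.permGroup X := indecomposable_iff_isPretransitive.mp hC
  obtain ⟨f, hf, hfG⟩ :=
    exists_surjective_equivariant_zmod (X := X) hG (hX ▸ dvd_pow_self p two_ne_zero)
  obtain ⟨e, -, htri⟩ :=
    hC.exists_permGroup_transport_le_triangular hX hG hf fun g hg => hfG ⟨g, hg⟩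
  rcases (hC.transport e).exists_isGrading_or_exists_isShiftForm
    (isPGroup_permGroup_transport e hG) htri with ⟨f', hf'⟩ | ⟨e', c, Φ, h⟩
  · exact .inl ⟨_, hf'.of_transport⟩
  rcases h.exists_isGrading_or_exists_transport_op ((hC.transport e).transport e') with
    ⟨f', hf'⟩ | ⟨e'', Ψ, hΨ⟩
  · exact .inl ⟨_, hf'.of_transport.of_transport⟩
  · exact .inr ⟨(e.trans e').trans e'', Ψ, hΨ⟩

end PGroupCase

section GradedCase

variable {p : ℕ} {X : Type*} {C : CycleSet X} {f : X → ZMod p}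

lemma IsGrading.multisetPerm_apply (hf : C.IsGrading f) (a : Multiset X) (v : X) :
    f (C.multisetPerm a v) = f v + a.card := by
  induction a using Multiset.induction with
  | empty => rw [multisetPerm_zero, Perm.one_apply, Multiset.card_zero, Nat.cast_zero, add_zero]
  | cons x a ih =>
    rw [multisetPerm_cons, Perm.mul_apply, sigma_apply, hf, ih, Multiset.card_cons, Nat.cast_succ,
      add_assoc]

lemma IsGrading.exists_degree [Finite X] [Nonempty X] (hf : C.IsGrading f) :
    ∃ ε : C.PermBrace →+ ZMod p, (∀ (g : C.permGroup) q, ε (g • q) = ε q) ∧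
      ∀ q v, f ((PermBrace.perm q : Perm X) v) = f v + ε q := by
  let card : Multiset X →+ ZMod p := (Nat.castAddMonoidHom (ZMod p)).comp Multiset.cardHom
  have hcard : C.multisetCon ≤ AddCon.ker card := by
    intro a b (hab : C.multisetPerm a = C.multisetPerm b)
    have h := hf.multisetPerm_apply a (Classical.arbitrary X)
    rw [hab, hf.multisetPerm_apply] at h
    exact (add_left_cancel h).symm
  refine ⟨AddCon.lift C.multisetCon card hcard, fun g q => ?_, fun q v => ?_⟩ <;>
    obtain ⟨a, rfl⟩ := PermBrace.mk_surjective q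
  · exact congrArg Nat.cast (Multiset.card_map g.1 a)
  · exact hf.multisetPerm_apply a v

lemma IsGrading.exists_isIso_forall_apply_eq [Fact p.Prime] [Finite X] [Nonempty X]
    (hf : C.IsGrading f) (hG : IsPGroup p C.permGroup)
    (h : ∃ g ∈ C.permGroup, g ≠ 1 ∧ ∀ x, f (g x) = f x) :
    ∃ g ∈ C.permGroup, g ≠ 1 ∧ (∀ x, f (g x) = f x) ∧ C.IsIso C g := by
  obtain ⟨ε, hεG, hε⟩ := hf.exists_degree
  have hker (q : C.PermBrace) : q ∈ ε.ker ↔ ∀ x, f ((PermBrace.perm q : Perm X) x) = f x := by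
    simp [AddMonoidHom.mem_ker, hε]
  have hbot : ε.ker ≠ ⊥ := by
    obtain ⟨g, hg, hg1, hgf⟩ := h
    obtain ⟨q, hq⟩ := PermBrace.perm_surjective ⟨g, hg⟩
    intro hbot
    have hq0 : q ∈ ε.ker := (hker q).mpr fun x => by rw [hq, hgf]
    rw [hbot, AddSubgroup.mem_bot] at hq0
    rw [hq0, PermBrace.perm_zero] at hq
    exact hg1 (congrArg Subtype.val hq).symm
  obtain ⟨q, hq, hq1, haut⟩ := PermBrace.exists_isIso_perm_of_isPGroup hG hbot fun g q hq => by
    rwa [AddMonoidHom.mem_ker, hεG]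
  exact ⟨PermBrace.perm q, (PermBrace.perm q).2, fun h1 => hq1 (Subtype.ext h1), (hker q).mp hq,
    haut⟩

lemma IsGrading.exists_forall_apply_eq_add [Finite X] (hf : C.IsGrading f)
    {g : Perm X} (hg : g ∈ C.permGroup) : ∃ s, ∀ x, f (g x) = f x + s := by
  obtain ⟨a, rfl⟩ := C.exists_multisetPerm_eq hg
  exact ⟨a.card, hf.multisetPerm_apply a⟩

lemma IsGrading.exists_iterate_apply_eq [NeZero p] (hf : C.IsGrading f) (x : X) (b : ZMod p) :
    ∃ n, f ((C.op x)^[n] x) = b := by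
  have h := (show Function.Semiconj f (C.op x) (· + 1) from hf x).iterate_right (b - f x).val x
  rw [add_right_iterate, nsmul_one, ZMod.natCast_zmod_val] at h
  exact ⟨_, h.trans (add_sub_cancel (f x) b)⟩

lemma IsGrading.surjective [NeZero p] [Nonempty X] (hf : C.IsGrading f) :
    Function.Surjective f := fun b =>
  let ⟨_, hn⟩ := hf.exists_iterate_apply_eq (Classical.arbitrary X) b
  ⟨_, hn⟩

variable [hp : Fact p.Prime] {D : CycleSet (ZMod p × ZMod p)}
  {F : ZMod p × ZMod p → ZMod p → ZMod p} {φ : ZMod p → ZMod p}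

lemma apply_add_apply_of_isIso_skewShift (hop : ∀ u b y, D.op u (b, y) = (b + 1, y + F u b))
    (haut : D.IsIso D (skewShift 0 φ)) (a x b : ZMod p) :
    F (a, x + φ a) b + φ b = F (a, x) b + φ (b + 1) := by
  have h := congrArg Prod.snd (haut.2 (a, x) (b, 0))
  simp only [hop, skewShift_apply, add_zero] at h
  linear_combination -h

-- Otherwise `φ` has no zero, `F (a, x) b` is affine in `x` with slope `(φ (b + 1) - φ b) / φ a`,
-- and comparing slopes in (C1) makes `φ b / φ (b + 1)` independent of `b`.
lemma apply_eq_of_isIso_skewShift_zero (hop : ∀ u b y, D.op u (b, y) = (b + 1, y + F u b))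
    (haut : D.IsIso D (skewShift 0 φ)) (a b : ZMod p) : φ a = φ b := by
  have hF := apply_add_apply_of_isIso_skewShift hop haut
  let Δ (d : ZMod p) := φ (d + 1) - φ d
  by_cases hΔ : ∀ d, Δ d = 0
  · exact apply_eq_of_apply_add_eq one_ne_zero (fun d => sub_eq_zero.mp (hΔ d)) a b
  obtain ⟨d, hd⟩ := not_forall.mp hΔ
  have hφ (a : ZMod p) : φ a ≠ 0 := by
    intro ha
    have h := hF a 0 d
    rw [ha, add_zero] at h
    exact hd (by linear_combination -h)
  have haffine (a x b : ZMod p) : F (a, x) b = F (a, 0) b + Δ b / φ a * x :=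
    apply_eq_add_div_mul (c := fun x => F (a, x) b) (hφ a)
      (fun x => by linear_combination hF a x b) x
  have hC1 (a x b d : ZMod p) : F (a, x) d + F (b + 1, F (a, x) b) (d + 1) =
      F (b, 0) d + F (a + 1, x + F (b, 0) a) (d + 1) := by
    have h := congrArg Prod.snd (D.c1 (a, x) (b, 0) (d, 0))
    simp only [hop] at h
    simpa only [zero_add] using h
  have hslope (b : ZMod p) : Δ (d - 1) / φ 0 + Δ b / φ 0 * (Δ d / φ (b + 1)) = Δ d / φ (0 + 1) := by
    have h0 := hC1 0 0 b (d - 1)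
    have h1 := hC1 0 1 b (d - 1)
    rw [sub_add_cancel, haffine (b + 1), haffine (0 + 1) (_ + _)] at h0 h1
    rw [haffine 0 1 (d - 1), haffine 0 1 b] at h1
    linear_combination h1 - h0
  have hratio (b : ZMod p) : φ b / φ (b + 1) = φ 0 / φ (0 + 1) := by
    have h : Δ b / φ (b + 1) = Δ 0 / φ (0 + 1) := by
      refine mul_left_cancel₀ (div_ne_zero hd (hφ 0)) ?_
      linear_combination hslope b - hslope 0
    simp only [Δ, sub_div, div_self (hφ _)] at h
    linear_combination -h
  refine apply_eq_of_apply_add_eq_mul (s := 1) (r := (φ 0 / φ (0 + 1))⁻¹) one_ne_zero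
    (fun b => ?_) a b
  rw [← hratio b, inv_div, div_mul_cancel₀ _ (hφ b)]

theorem IsGrading.exists_transport_op [Finite X] (hf : C.IsGrading f) (hX : Nat.card X = p ^ 2)
    (hG : IsPGroup p C.permGroup) (hC : C.Indecomposable) :
    ∃ (e : X ≃ ZMod p × ZMod p) (F : ZMod p → ZMod p → ZMod p),
      ∀ a x b y, (C.transport e).op (a, x) (b, y) = (b + 1, y + F a b) := by
  have : Nonempty X := (Nat.card_pos_iff.mp (hX ▸ pow_pos hp.out.pos 2)).1
  obtain ⟨e, hef, htri⟩ := hC.exists_permGroup_transport_le_triangular hX hG hf.surjective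
    fun g hg => hf.exists_forall_apply_eq_add hg
  have hD := hC.transport e
  have hfst : (C.transport e).IsGrading Prod.fst := fun u v => by
    rw [transport_op, hef, hf, ← hef, apply_symm_apply]
  obtain ⟨c, F, hcF⟩ := exists_op_eq_of_permGroup_le_triangular htri
  have hop (u : ZMod p × ZMod p) (b y : ZMod p) :
      (C.transport e).op u (b, y) = (b + 1, y + F u b) := by
    exact Prod.ext (hfst u (b, y)) (by rw [hcF])
  have hcard : Nat.card (ZMod p × ZMod p) = p ^ 2 := by rw [Nat.card_prod, Nat.card_zmod, sq]
  obtain ⟨t, ht, ht1, htf, haut⟩ := hfst.exists_isIso_forall_apply_eq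
    (isPGroup_permGroup_transport e hG) <| exists_mem_ne_one_forall_apply_eq hcard hD
      fun g hg => hfst.exists_forall_apply_eq_add hg
  obtain ⟨s, φ, rfl⟩ := htri ht
  obtain rfl : s = 0 := (zero_add s).symm.trans (htf (0, 0))
  have hφ := apply_eq_of_isIso_skewShift_zero hop haut
  have hφ0 : φ 0 ≠ 0 := fun h0 => ht1 <| by
    rw [show φ = 0 from funext fun b => (hφ b 0).trans h0, skewShift_zero_zero]
  refine ⟨e, fun a => F (a, 0), fun a x b y => ?_⟩
  rw [hop, apply_eq_of_apply_add_eq (k := fun x => F (a, x) b) hφ0 (fun x => ?_) x 0]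
  have h := apply_add_apply_of_isIso_skewShift hop haut a x b
  rwa [hφ a 0, hφ b 0, hφ (b + 1) 0, add_left_inj] at h

end GradedCase

section CompatibleGraded

variable {X : Type*} {D E : CycleSet X} {p : ℕ} {f : X → ZMod p}

lemma Compatible.op_mem_fixedPoints (h : D.Compatible E) {u w : X}
    (hu : ∀ v, E.op v u = u) (hw : ∀ v, E.op v w = w) (v : X) :
    E.op v (D.op u w) = D.op u w := by
  obtain ⟨v, rfl⟩ := (D.c2 u).2 v
  rw [h, hu, hw]

lemma Indecomposable.op_eq_of_isGrading [Finite X] [NeZero p] (hD : D.Indecomposable)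
    (hf : D.IsGrading f) (hfD : ∀ x y, f x = f y → D.op x = D.op y) (h : D.Compatible E) {w : X}
    (hw : ∀ v, E.op v w = w) (v x : X) : E.op v x = x := by
  let S : Set X := {x | ∀ v, E.op v x = x}
  have hS (u : X) : ∃ u' ∈ S, f u' = f u := by
    obtain ⟨n, hn⟩ := hf.exists_iterate_apply_eq w (f u)
    exact ⟨_, (show Set.MapsTo (D.op w) S S from
      fun x hx => h.op_mem_fixedPoints hw hx).iterate n hw, hn⟩
  have huniv : S = Set.univ := by
    refine hD.eq_univ_of_forall_op_mem ⟨w, hw⟩ fun u x hx => ?_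
    obtain ⟨u', hu', hfu⟩ := hS u
    rw [← hfD u' u hfu]
    exact h.op_mem_fixedPoints hu' hx
  exact Set.eq_univ_iff_forall.mp huniv x v

theorem FixedPointGenerated.op_eq_of_isGrading [Finite X] [NeZero p] (hDE : D.FixedPointGenerated E)
    (hD : D.Indecomposable) (hf : D.IsGrading f) (hfD : ∀ x y, f x = f y → D.op x = D.op y)
    (v x : X) : E.op v x = x := by
  induction hDE generalizing v with
  | of_fixedPoint h hw => exact hD.op_eq_of_isGrading hf hfD h hw v x
  | comp _ _ h ih₁ ih₂ => rw [h, ih₁ v, ih₂]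

lemma FixedPointGenerated.op_eq_of_op_eq_add_one [NeZero p] {D E : CycleSet (ZMod p × ZMod p)}
    (hDE : D.FixedPointGenerated E) (hD : D.Indecomposable) {F : ZMod p → ZMod p → ZMod p}
    (hop : ∀ a x b y, D.op (a, x) (b, y) = (b + 1, y + F a b)) (v x : ZMod p × ZMod p) :
    E.op v x = x := by
  refine hDE.op_eq_of_isGrading (f := Prod.fst) hD
    (fun u v => congrArg Prod.fst (hop u.1 u.2 v.1 v.2)) ?_ v x
  rintro ⟨a, x⟩ ⟨_, y⟩ rfl
  exact funext fun v => (hop a x v.1 v.2).trans (hop a y v.1 v.2).symm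

end CompatibleGraded

section CompatibleUngraded

lemma Compatible.exists_mem_permGroup_op_apply {X : Type*} {D E : CycleSet X} (h : D.Compatible E)
    {g : Perm X} (hg : g ∈ D.permGroup) (v : X) :
    ∃ g' ∈ D.permGroup, ∀ w, E.op (g v) (g w) = g' (E.op v w) := by
  induction hg using Subgroup.closure_induction generalizing v with
  | mem g hg =>
    obtain ⟨u, rfl⟩ := hg
    exact ⟨_, D.sigma_mem_permGroup (E.op v u), h u v⟩
  | one => exact ⟨1, one_mem _, fun w => rfl⟩
  | mul g k _ _ ihg ihk =>
    obtain ⟨k', hk', hk⟩ := ihk v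
    obtain ⟨g', hg', hg⟩ := ihg (k v)
    exact ⟨g' * k', mul_mem hg' hk', fun w => by
      rw [Perm.mul_apply, Perm.mul_apply, hg, hk, Perm.mul_apply]⟩
  | inv g _ ih =>
    obtain ⟨g', hg', hg⟩ := ih (g⁻¹ v)
    refine ⟨g'⁻¹, inv_mem hg', fun w => ?_⟩
    rw [Perm.eq_inv_iff_eq, ← hg, ← Perm.mul_apply, ← Perm.mul_apply, mul_inv_cancel,
      Perm.one_apply, Perm.one_apply]

lemma fst_apply_eq_of_injective_of_ne {A B : Type*} [Finite A] [Finite B] {h : A × B → A × B}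
    (hinj : Function.Injective h) {a₀ : A} (hcol : ∀ a ≠ a₀, ∀ x y, (h (a, x)).1 = (h (a, y)).1)
    (a : A) (x y : B) : (h (a, x)).1 = (h (a, y)).1 := by
  have heq {a a' : A} (ha : a ≠ a₀) {x x' : B} (hx : (h (a', x')).1 = (h (a, x)).1) : a' = a := by
    have hsurj : Function.Surjective fun z => (h (a, z)).2 :=
      Finite.injective_iff_surjective.mp fun z z' hz =>
        congrArg Prod.snd (hinj (Prod.ext (hcol a ha z z') hz))
    obtain ⟨z, hz⟩ := hsurj (h (a', x')).2
    exact congrArg Prod.fst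
      (hinj (Prod.ext (hx.trans (hcol a ha x z)) hz.symm : h (a', x') = h (a, z)))
  rcases ne_or_eq a a₀ with ha | rfl
  · exact hcol a ha x y
  have hmeet (x : B) : Function.Surjective fun b => (h (b, x)).1 := by
    refine Finite.injective_iff_surjective.mp fun b b' hb => ?_
    by_cases hba : b = a
    · by_cases hba' : b' = a
      · rw [hba, hba']
      · exact heq hba' hb
    · exact (heq hba hb.symm).symm
  obtain ⟨b, hb⟩ := hmeet y (h (a, x)).1
  rcases eq_or_ne b a with rfl | hba
  · exact hb.symm
  · exact absurd (heq hba hb.symm).symm hba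

variable {p : ℕ} [Fact p.Prime] {Φ : ZMod p → ZMod p} {D E : CycleSet (ZMod p × ZMod p)}

lemma exists_skewShift_mem_permGroup (hΦ : ∃ i j, Φ i ≠ Φ j)
    (hop : ∀ a x b y, D.op (a, x) (b, y) = (b + x, y + Φ (b - a))) {b d : ZMod p} (hbd : d ≠ b) :
    ∃ φ : ZMod p → ZMod p, skewShift 0 φ ∈ D.permGroup ∧ φ b = 0 ∧ φ d ≠ 0 := by
  have hmem (a c : ZMod p) : skewShift 0 (fun b => c * Φ (b - a)) ∈ D.permGroup := by
    have h : D.sigma (a, 0) = skewShift 0 fun b => Φ (b - a) :=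
      Perm.ext fun v => hop a 0 v.1 v.2
    have hpow := pow_mem (D.sigma_mem_permGroup (a, 0)) c.val
    rw [h, skewShift_zero_pow] at hpow
    simpa only [Pi.smul_def, nsmul_eq_mul, ZMod.natCast_zmod_val] using hpow
  -- Otherwise the vectors `(Φ (b - a), Φ (d - a))` are pairwise proportional, so translation by
  -- `d - b` multiplies `Φ` by a constant.
  by_contra! hcon
  have hdet (a a' : ZMod p) : Φ (b - a') * Φ (d - a) = Φ (b - a) * Φ (d - a') := by
    have h := mul_mem (hmem a (Φ (b - a'))) (hmem a' (-Φ (b - a)))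
    rw [skewShift_zero_mul_skewShift_zero] at h
    have hd := hcon _ h (by simp only [Pi.add_apply]; ring)
    rw [Pi.add_apply] at hd
    linear_combination hd
  obtain ⟨k, hk⟩ := exists_ne_zero_of_exists_ne hΦ
  obtain ⟨i, j, hij⟩ := hΦ
  refine hij (apply_eq_of_apply_add_eq_mul (s := d - b) (r := Φ (k + (d - b)) / Φ k)
    (sub_ne_zero.mpr hbd) (fun t => ?_) i j)
  have h := hdet (b - t) (b - k)
  simp only [sub_sub_cancel, show ∀ c, d - (b - c) = c + (d - b) by intro c; ring] at h
  rw [div_mul_eq_mul_div, eq_div_iff hk]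
  linear_combination h

lemma Compatible.fst_op_eq (h : D.Compatible E) (hΦ : ∃ i j, Φ i ≠ Φ j)
    (hop : ∀ a x b y, D.op (a, x) (b, y) = (b + x, y + Φ (b - a))) (v : ZMod p × ZMod p)
    (d e e' : ZMod p) : (E.op v (d, e)).1 = (E.op v (d, e')).1 := by
  have htri : D.permGroup ≤ triangular (ZMod p) (ZMod p) := by
    refine (Subgroup.closure_le _).mpr ?_
    rintro _ ⟨⟨a, x⟩, rfl⟩
    exact ⟨x, fun b => Φ (b - a), Perm.ext fun v => hop a x v.1 v.2⟩
  refine fst_apply_eq_of_injective_of_ne (E.c2 v).1 (a₀ := v.1) (fun d hd e e' => ?_) d e e'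
  obtain ⟨φ, hφ, hφv, hφd⟩ := exists_skewShift_mem_permGroup hΦ hop hd
  have hv : skewShift 0 φ v = v :=
    Prod.ext (add_zero v.1) (congrArg (v.2 + ·) hφv |>.trans (add_zero v.2))
  obtain ⟨g', hg', hcomm⟩ := h.exists_mem_permGroup_op_apply hφ v
  obtain ⟨s, φ', rfl⟩ := htri hg'
  simp only [hv] at hcomm
  obtain rfl : s = 0 := by
    have hs := congrArg Prod.fst (hcomm v)
    rw [hv] at hs
    exact left_eq_add.mp hs
  refine apply_eq_of_apply_add_eq (k := fun e => (E.op v (d, e)).1) hφd (fun e => ?_) e e'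
  have he := congrArg Prod.fst (hcomm (d, e))
  rw [skewShift_apply, add_zero] at he
  exact he.trans (add_zero _)

lemma Compatible.exists_op_eq_sub (h : D.Compatible E) {w : ZMod p × ZMod p}
    (hw : ∀ v, E.op v w = w) (hΦ : ∃ i j, Φ i ≠ Φ j)
    (hop : ∀ a x b y, D.op (a, x) (b, y) = (b + x, y + Φ (b - a))) :
    ∃ P : ZMod p → ZMod p → ZMod p,
      ∀ b y d e, E.op (b, y) (d, e) = (P b d, w.1 - P b (w.1 - e)) := by
  have hfst (v : ZMod p × ZMod p) (d e : ZMod p) : (E.op v (d, e)).1 = (E.op v (d, 0)).1 :=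
    h.fst_op_eq hΦ hop v d e 0
  have hcomm (a x b y d : ZMod p) : (E.op (b + x, y + Φ (b - a)) (d + x, 0)).1 =
      (E.op (b, y) (d, 0)).1 + (E.op (b, y) (a, x)).2 := by
    rw [← hfst _ _ (0 + Φ (d - a)), ← hop, ← hop, h]
    exact congrArg Prod.fst (hop _ _ _ _)
  have hsnd (b y a x : ZMod p) : (E.op (b, y) (a, x)).2 = w.1 - (E.op (b, y) (w.1 - x, 0)).1 := by
    have h' := hcomm a x b y (w.1 - x)
    rw [sub_add_cancel, ← hfst _ _ w.2, hw] at h'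
    exact eq_sub_of_add_eq' h'.symm
  obtain ⟨k, hk⟩ := exists_ne_zero_of_exists_ne hΦ
  have hcol (b y d : ZMod p) : (E.op (b, y) (d, 0)).1 = (E.op (b, 0) (d, 0)).1 := by
    refine apply_eq_of_apply_add_eq (k := fun y => (E.op (b, y) (d, 0)).1) hk (fun y => ?_) y 0
    have h' := hcomm (b - k) 0 b y d
    rwa [add_zero, add_zero, sub_sub_cancel, hsnd, sub_zero, ← hfst _ w.1 w.2, hw, sub_self,
      add_zero] at h'
  exact ⟨fun b d => (E.op (b, 0) (d, 0)).1, fun b y d e =>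
    Prod.ext ((hfst _ d e).trans (hcol b y d)) (by rw [hsnd, hcol])⟩

lemma Compatible.exists_op_eq_affine (h : D.Compatible E) {w : ZMod p × ZMod p}
    (hw : ∀ v, E.op v w = w) (hΦ : ∃ i j, Φ i ≠ Φ j)
    (hop : ∀ a x b y, D.op (a, x) (b, y) = (b + x, y + Φ (b - a))) :
    ∃ α s, α ≠ 0 ∧ (∀ A, Φ (α * A) = α * Φ A) ∧ ∀ v a x, E.op v (a, x) = (α * a + s, α * x) := by
  obtain ⟨P, hP⟩ := h.exists_op_eq_sub hw hΦ hop
  obtain ⟨k, hk⟩ := exists_ne_zero_of_exists_ne hΦ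
  have hPw (b : ZMod p) : P b w.1 = w.1 :=
    (congrArg Prod.fst (hP b 0 w.1 w.2)).symm.trans (congrArg Prod.fst (hw _))
  have hfst (x b d : ZMod p) : P (b + x) (d + x) = P b d + (w.1 - P b (w.1 - x)) := by
    have h' := congrArg Prod.fst (h (0, x) (b, 0) (d, 0))
    simpa only [hop, hP] using h'
  have hsnd (a b d e : ZMod p) : P b (w.1 - (e + Φ (d - a))) =
      P b (w.1 - e) - Φ (P b d - P b a) := by
    have h' := congrArg Prod.snd (h (a, 0) (b, 0) (d, e))
    simp only [hop, hP] at h'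
    rw [add_zero] at h'
    linear_combination -h'
  let μ (b : ZMod p) := Φ (P b k - P b 0) / Φ k
  have haffine (b d : ZMod p) : P b d = w.1 + μ b * (d - w.1) := by
    have h' := apply_eq_add_div_mul (c := fun e => P b (w.1 - e)) (δ := -Φ (P b k - P b 0)) hk
      (fun e => by rw [← sub_eq_add_neg, ← hsnd 0 b k e, sub_zero]) (w.1 - d)
    simp only [sub_sub_cancel, sub_zero, hPw] at h'
    linear_combination h'
  have hμ (b : ZMod p) : μ b = μ 0 := by
    have h' := hfst b 0 (w.1 + 1 - b)
    rw [zero_add, sub_add_cancel] at h'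
    simp only [haffine] at h'
    linear_combination h'
  have hE (v : ZMod p × ZMod p) (a x : ZMod p) :
      E.op v (a, x) = (μ 0 * a + (1 - μ 0) * w.1, μ 0 * x) := by
    obtain ⟨b, y⟩ := v
    rw [hP, haffine, haffine, hμ]
    exact Prod.ext (by ring) (by ring)
  refine ⟨μ 0, (1 - μ 0) * w.1, fun h0 => ?_, fun A => ?_, hE⟩
  · have h01 : E.op 0 (0, 0) = E.op 0 (0, 1) := by simp only [hE, h0, zero_mul]
    exact zero_ne_one (congrArg Prod.snd ((E.c2 0).1 h01))
  · have h' := hsnd 0 0 A 0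
    simp only [haffine, sub_zero] at h'
    rw [show w.1 + μ 0 * (A - w.1) - (w.1 + μ 0 * (0 - w.1)) = μ 0 * A by ring] at h'
    linear_combination h'

theorem FixedPointGenerated.exists_op_eq_affine (hDE : D.FixedPointGenerated E)
    (hΦ : ∃ i j, Φ i ≠ Φ j)
    (hop : ∀ a x b y, D.op (a, x) (b, y) = (b + x, y + Φ (b - a))) :
    ∃ α s, α ≠ 0 ∧ (∀ A, Φ (α * A) = α * Φ A) ∧ ∀ v a x, E.op v (a, x) = (α * a + s, α * x) := by
  induction hDE with
  | of_fixedPoint h hw => exact h.exists_op_eq_affine hw hΦ hop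
  | comp _ _ h ih₁ ih₂ =>
    obtain ⟨α, s, hα, hαΦ, h₁⟩ := ih₁
    obtain ⟨β, t, hβ, hβΦ, h₂⟩ := ih₂
    refine ⟨β * α, β * s + t, mul_ne_zero hβ hα, fun A => ?_, fun v a x => ?_⟩
    · rw [mul_assoc, hβΦ, hαΦ, mul_assoc]
    · simp only [h v, h₁, h₂]
      exact Prod.ext (by ring) (by ring)

end CompatibleUngraded

section NormalForms

variable {X : Type*} {C : CycleSet X}

lemma exists_equiv_zmod_of_forall_sameCycle {n : ℕ} [NeZero n] (hX : Nat.card X = n) {g : Perm X}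
    (hg : ∀ x y, g.SameCycle x y) : ∃ e : X ≃ ZMod n, ∀ v, e (g v) = e v + 1 := by
  obtain ⟨⟨x₀⟩, _⟩ := Nat.card_pos_iff.mp (hX ▸ NeZero.pos n)
  have := Fintype.ofFinite X
  have hcycle : g.IsCycleOn (Finset.univ : Finset X) :=
    ⟨by rw [Finset.coe_univ]; exact g.bijective.bijOn_univ, fun x _ y _ => hg x y⟩
  have hcard : (Finset.univ : Finset X).card = n := by
    rw [Finset.card_univ, ← Nat.card_eq_fintype_card, hX]
  have hpow : g ^ n = 1 := Perm.ext fun x => hcard ▸ hcycle.pow_card_apply (Finset.mem_univ x)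
  let f (k : ZMod n) := (g ^ k.val) x₀
  have hf (m : ℕ) : f m = (g ^ m) x₀ := by
    simp only [f, ZMod.val_natCast, ← pow_eq_pow_mod m hpow]
  have hsurj : Function.Surjective f := fun x => by
    obtain ⟨m, -, hm⟩ := hcycle.exists_pow_eq (Finset.mem_univ x₀) (Finset.mem_univ x)
    exact ⟨m, (hf m).trans hm⟩
  have hbij : Function.Bijective f :=
    hsurj.bijective_of_nat_card_le (by rw [hX, Nat.card_zmod])
  refine ⟨(Equiv.ofBijective f hbij).symm, fun v => ?_⟩
  obtain ⟨k, rfl⟩ := hsurj v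
  have hk : g (f k) = f (k + 1) := by
    rw [← ZMod.natCast_zmod_val k, ← Nat.cast_succ, hf, hf, pow_succ', Perm.mul_apply]
  rw [hk, ofBijective_symm_apply_apply, ofBijective_symm_apply_apply]

lemma Indecomposable.exists_iso_zmod {n : ℕ} [NeZero n] (hC : C.Indecomposable)
    (hX : Nat.card X = n) {g : Perm X} (hg : ∀ u v, C.op u v = g v) :
    ∃ D : CycleSet (ZMod n), (∀ x y, D.op x y = y + 1) ∧ C.Iso D := by
  have hle : C.permGroup ≤ Subgroup.zpowers g := by
    refine (Subgroup.closure_le _).mpr ?_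
    rintro _ ⟨u, rfl⟩
    exact (Perm.ext (hg u) : C.sigma u = g) ▸ Subgroup.mem_zpowers g
  obtain ⟨e, he⟩ := exists_equiv_zmod_of_forall_sameCycle hX (g := g) fun x y => by
    obtain ⟨h, hh, hxy⟩ := hC x y
    obtain ⟨k, rfl⟩ := hle hh
    exact ⟨k, hxy⟩
  exact ⟨C.transport e, fun x y => by rw [transport_op, hg, he, apply_symm_apply],
    C.iso_transport e⟩

variable {p : ℕ} [Fact p.Prime] {D : CycleSet (ZMod p × ZMod p)}

lemma exists_eq_sub_add_diagonal {F : ZMod p → ZMod p → ZMod p}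
    (hop : ∀ a x b y, D.op (a, x) (b, y) = (b + 1, y + F a b)) :
    ∃ Φ : ZMod p → ZMod p, Φ 0 = 0 ∧ ∀ a b, F a b = Φ (b - a) + F b b := by
  have hF (a b : ZMod p) : F (a + 1) (b + 1) - F (b + 1) (b + 1) = F a b - F b b := by
    have h := congrArg Prod.snd (D.c1 (a, 0) (b, 0) (b, 0))
    simp only [hop] at h
    linear_combination -h
  refine ⟨fun t => F (-t) 0 - F 0 0, by simp only [neg_zero, sub_self], fun a b => ?_⟩
  have h := apply_eq_of_apply_add_eq (k := fun t => F (a - b + t) t - F t t) one_ne_zero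
    (fun t => by rw [← add_assoc, hF]) b 0
  rw [sub_add_cancel, add_zero] at h
  simp only [neg_sub]
  linear_combination h

theorem Indecomposable.exists_iso_of_op_eq_add_one (hD : D.Indecomposable)
    {F : ZMod p → ZMod p → ZMod p}
    (hop : ∀ a x b y, D.op (a, x) (b, y) = (b + 1, y + F a b)) :
    (∃ D' : CycleSet (ZMod (p ^ 2)), (∀ x y, D'.op x y = y + 1) ∧ D.Iso D') ∨
      ∃ (Φ : ZMod p → ZMod p) (S : ZMod p), (∃ i j, Φ i ≠ Φ j) ∧ Φ 0 = 0 ∧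
        ∃ D' : CycleSet (ZMod p × ZMod p),
          (∀ a b x y, D'.op (a, x) (b, y) =
            (b + 1, y + (if b = 0 then S else 0) + Φ (b - a))) ∧ D.Iso D' := by
  obtain ⟨Φ, hΦ0, hF⟩ := exists_eq_sub_add_diagonal hop
  by_cases hΦ : ∃ i j, Φ i ≠ Φ j
  · obtain ⟨η, hη⟩ := exists_coboundary fun b => F b b
    let e := skewShift 0 (-η)
    refine .inr ⟨Φ, ∑ b, F b b, hΦ, hΦ0, D.transport e, fun a b x y => ?_, D.iso_transport e⟩
    have he (b y : ZMod p) : e.symm (b, y) = (b, y + η b) :=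
      e.symm_apply_eq.mpr (Prod.ext (add_zero b).symm (add_neg_cancel_right y (η b)).symm)
    rw [transport_op, he, he, hop, hF, skewShift_apply, add_zero, Pi.neg_apply, hη]
    exact Prod.ext rfl (by ring)
  · push Not at hΦ
    refine .inl (hD.exists_iso_zmod (g := D.sigma 0)
      (by rw [Nat.card_prod, Nat.card_zmod, sq]) ?_)
    rintro ⟨a, x⟩ ⟨b, y⟩
    rw [hop, hF, hΦ (b - a) (b - 0), ← hF]
    exact (hop 0 0 b y).symm

theorem exists_iso_of_op_eq_mul_add {Φ : ZMod p → ZMod p} {α s : ZMod p}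
    (hop : ∀ a x b y,
      D.op (a, x) (b, y) = (α * (b + x) + s, α * (y + Φ (b - a)))) :
    ∃ D' : CycleSet (ZMod p × ZMod p),
      (∀ a b x y, D'.op (a, x) (b, y) = (α * b + α * x, α * y + α * Φ (b - a))) ∧ D.Iso D' := by
  obtain ⟨c, d, hc, hd⟩ : ∃ c d, α * (c + d) + s = c ∧ α * d = d := by
    rcases eq_or_ne α 1 with rfl | hα
    · exact ⟨0, -s, by ring, one_mul _⟩
    · have hα' : 1 - α ≠ 0 := sub_ne_zero.mpr hα.symm
      refine ⟨s / (1 - α), 0, ?_, mul_zero α⟩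
      field_simp
      ring
  let e : ZMod p × ZMod p ≃ ZMod p × ZMod p := Equiv.subRight (c, d)
  refine ⟨D.transport e, fun a b x y => ?_, D.iso_transport e⟩
  have h : (D.transport e).op (a, x) (b, y) = D.op (a + c, x + d) (b + c, y + d) - (c, d) := rfl
  rw [h, hop, add_sub_add_right_eq_sub]
  exact Prod.ext (by simp only [Prod.fst_sub]; linear_combination hc)
    (by simp only [Prod.snd_sub]; linear_combination hd)

end NormalForms

end CycleSet

theorem stmt17 {p : ℕ} (hp : p.Prime) {X : Type} (C : CycleSet X)
    (hcard : Nat.card X = p ^ 2) (hind : C.Indecomposable) :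
    (∃ D : CycleSet (ZMod (p ^ 2)),
      (∀ x y : ZMod (p ^ 2), D.op x y = y + 1) ∧ C.Iso D) ∨
    (∃ (Φ : ZMod p → ZMod p) (S : ZMod p),
      (∃ i j : ZMod p, Φ i ≠ Φ j) ∧ Φ 0 = 0 ∧
      ∃ D : CycleSet (ZMod p × ZMod p),
        (∀ a b x y : ZMod p,
          D.op (a, x) (b, y) = (b + 1, y + (if b = 0 then S else 0) + Φ (b - a))) ∧
        C.Iso D) ∨
    (∃ (Φ : ZMod p → ZMod p) (α : ZMod p),
      (∃ i j : ZMod p, Φ i ≠ Φ j) ∧ (∀ A : ZMod p, Φ (-A) = Φ A) ∧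
      α ≠ 0 ∧ (∀ A : ZMod p, Φ (α * A) = α * Φ A) ∧
      ∃ D : CycleSet (ZMod p × ZMod p),
        (∀ a b x y : ZMod p,
          D.op (a, x) (b, y) = (α * b + α * x, α * y + α * Φ (b - a))) ∧
        C.Iso D) := by
  have : Fact p.Prime := ⟨hp⟩
  have : Finite X := Nat.finite_of_card_ne_zero (hcard ▸ pow_ne_zero 2 hp.ne_zero)
  obtain ⟨D, E, hpD, hD, hDE, hop⟩ := hind.exists_isPGroup_fixedPointGenerated hcard
  rcases hD.exists_isGrading_or_exists_transport_op hcard hpD with ⟨f, hf⟩ | ⟨e, Φ, hΦ, heven, hDop⟩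
  · obtain ⟨e, F, hDop⟩ := hf.exists_transport_op hcard hpD hD
    have hE := (hDE.transport e).op_eq_of_op_eq_add_one (hD.transport e) hDop
    have hCop (a x b y) : (C.transport e).op (a, x) (b, y) = (b + 1, y + F a b) := by
      rw [CycleSet.transport_op_eq hop, hE, hDop]
    rcases (hind.transport e).exists_iso_of_op_eq_add_one hCop with
      ⟨D', hD', hiso⟩ | ⟨Φ, S, hΦ, hΦ0, D', hD', hiso⟩
    · exact .inl ⟨D', hD', (C.iso_transport e).trans hiso⟩
    · exact .inr (.inl ⟨Φ, S, hΦ, hΦ0, D', hD', (C.iso_transport e).trans hiso⟩)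
  · obtain ⟨α, s, hα, hαΦ, hE⟩ := (hDE.transport e).exists_op_eq_affine hΦ hDop
    have hCop (a x b y) :
        (C.transport e).op (a, x) (b, y) = (α * (b + x) + s, α * (y + Φ (b - a))) := by
      rw [CycleSet.transport_op_eq hop, hDop a x b y, hE]
    obtain ⟨D', hD', hiso⟩ := CycleSet.exists_iso_of_op_eq_mul_add hCop
    exact .inr (.inr ⟨Φ, α, hΦ, heven, hα, hαΦ, D', hD', (C.iso_transport e).trans hiso⟩)
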